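/- arXiv:1802.05026 — 2 statements merged into one kernel-verified Lean document; each statement's English description precedes it below -/
import Mathlib

section
/- For every natural number k there exists a natural number t_k such that for every digraph G, either G contains k pairwise edge-disjoint directed cycles, or there is a set X of at most t_k directed edges of G such that the digraph obtained from G by deleting the edges in X contains no directed cycle. -/
/-- `l` is the (cyclically ordered) vertex list of a directed cycle in the digraph `G`:
it has at least two pairwise distinct vertices, and every consecutive pair (including
the wrap-around from the last vertex to the first) is a directed edge of `G`. -/
def Digraph.IsDicycle {V : Type} (G : Digraph V) (l : List V) : Prop :=
  2 ≤ l.length ∧ l.Nodup ∧ ∀ e ∈ l.zip (l.rotate 1), G.Adj e.1 e.2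

/-- The list of directed edges of the directed cycle with vertex list `l`. -/
def cycleEdges {V : Type} (l : List V) : List (V × V) :=
  l.zip (l.rotate 1)

/-- The directed line graph `L(G)` of `G`: its vertices are the directed edges of `G`
(encoded as those pairs in `V × V` that are edges of `G`), and there is a directed edge
from `(a, b)` to `(c, d)` iff both are edges of `G` and `b = c`. -/
def lineDigraph {V : Type} (G : Digraph V) : Digraph (V × V) :=
  ⟨fun e f => G.Adj e.1 e.2 ∧ G.Adj f.1 f.2 ∧ e.2 = f.1⟩

/-!
Edge-disjoint cycles of `G` are vertex-disjoint cycles of its line digraph, so it suffices to show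
that a finite digraph has `k` disjoint directed cycles or a feedback vertex set of size bounded in
terms of `k`. Induct on `k` and suppose that a minimum feedback vertex set `T` is large.

Splitting every vertex of `T` into a source and a sink gives an acyclic digraph, whose terminals
are well linked: a small separator between two large parts of `T` would separate two regions that
both contain a cycle; by induction each of them then has a small feedback set, since `k` disjoint
cycles in one and a cycle in the other would do, and this contradicts the minimality of `T`.

By Menger's theorem and Ramsey's theorem one may choose the linkages between blocks of terminals
uniformly. Either paths of distinct blocks avoid each other, and disjoint cycles are found block by
block, or two large linkages cross each other completely. In the latter case the paths of one of
them, the columns, cross a common cut such that before as well as after the cut the columns are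
again linked to each other, by means of the paths of the other linkage. Composing linkages before
and after the cut, one closes up to disjoint cycles: either by rerouting one of the two halves, or
by a third linkage, which avoids the columns after the deletion of few vertices.
-/

namespace ErdosPosa

open Finset Function Relation

universe u v

section Ramsey

/-! ### Ramsey's theorem -/

variable {κ : Type v}

lemma exists_subset_color_insert_eq {m : ℕ}
    (ramsey : ∀ M, ∃ N, ∀ {α : Type u} [LinearOrder α] (S : Finset α), N ≤ #S →
      ∀ c : Finset α → κ, ∃ T ⊆ S, #T = M ∧ ∃ k, ∀ A ⊆ T, #A = m → c A = k) (L : ℕ) :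
    ∃ N, ∀ {α : Type u} [LinearOrder α] (S : Finset α), N ≤ #S → ∀ c : Finset α → κ,
      ∃ T ⊆ S, #T = L ∧ ∃ χ : α → κ, ∀ a ∈ T, ∀ A ⊆ T, #A = m → (∀ b ∈ A, a < b) →
        c (insert a A) = χ a := by
  induction L with
  | zero => exact ⟨0, fun S _ c => ⟨∅, empty_subset S, rfl, fun _ => c ∅, by simp⟩⟩
  | succ L ih =>
    obtain ⟨N₁, hN₁⟩ := ih
    obtain ⟨N₂, hN₂⟩ := ramsey N₁
    refine ⟨N₂ + 1, fun S hS c => ?_⟩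
    have hne : S.Nonempty := card_pos.1 (by omega)
    set a := S.min' hne
    have haS : a ∈ S := S.min'_mem hne
    obtain ⟨R, hRS, hR, k, hk⟩ :=
      hN₂ (S.erase a) (by rw [card_erase_of_mem haS]; omega) fun A => c (insert a A)
    obtain ⟨T, hTR, hT, χ, hχ⟩ := hN₁ R hR.ge c
    have hTS : T ⊆ S.erase a := hTR.trans hRS
    have haT : a ∉ T := fun h => notMem_erase a S (hTS h)
    have lt_of_mem : ∀ b ∈ T, a < b := fun b hb => S.min'_lt_of_mem_erase_min' hne (hTS hb)
    refine ⟨insert a T, insert_subset haS (hTS.trans (erase_subset a S)),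
      by rw [card_insert_of_notMem haT, hT], update χ a k, fun b hb A hA hAm hbA => ?_⟩
    have haA : a ∉ A := fun haA => by
      rcases mem_insert.1 hb with rfl | hb
      · exact lt_irrefl _ (hbA _ haA)
      · exact lt_asymm (lt_of_mem b hb) (hbA a haA)
    have hAT : A ⊆ T := (subset_insert_iff_of_notMem haA).1 hA
    rcases mem_insert.1 hb with rfl | hb
    · rw [update_self]
      exact hk A (hAT.trans hTR) hAm
    · rw [update_of_ne (ne_of_mem_of_not_mem hb haT)]
      exact hχ b hb A hAT hAm hbA

theorem ramsey_finset (κ : Type v) [Finite κ] (m M : ℕ) :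
    ∃ N, ∀ {α : Type u} [LinearOrder α] (S : Finset α), N ≤ #S → ∀ c : Finset α → κ,
      ∃ T ⊆ S, #T = M ∧ ∃ k, ∀ A ⊆ T, #A = m → c A = k := by
  classical
  induction m generalizing M with
  | zero =>
    refine ⟨M, fun S hS c => ?_⟩
    obtain ⟨T, hTS, hT⟩ := exists_subset_card_eq hS
    exact ⟨T, hTS, hT, c ∅, fun A _ hA => by rw [card_eq_zero.1 hA]⟩
  | succ m ih =>
    have := Fintype.ofFinite κ
    obtain ⟨N, hN⟩ := exists_subset_color_insert_eq ih (Fintype.card κ * M)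
    refine ⟨N, fun S hS c => ?_⟩
    obtain ⟨R, hRS, hR, χ, hχ⟩ := hN S hS c
    obtain ⟨k, -, hk⟩ := exists_le_card_fiber_of_mul_le_card_of_maps_to (t := univ) (f := χ)
      (fun a _ => mem_univ (χ a)) ⟨c ∅, mem_univ _⟩ hR.ge
    obtain ⟨T, hT, hTM⟩ := exists_subset_card_eq hk
    have hTR : T ⊆ R := hT.trans (filter_subset _ _)
    refine ⟨T, hTR.trans hRS, hTM, k, fun A hA hAm => ?_⟩
    have hne : A.Nonempty := card_pos.1 (by omega)
    have hmin : A.min' hne ∈ A := A.min'_mem hne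
    calc c A = c (insert (A.min' hne) (A.erase (A.min' hne))) := by rw [insert_erase hmin]
      _ = χ (A.min' hne) := hχ _ (hTR (hA hmin)) _ ((erase_subset _ _).trans (hA.trans hTR))
          (by rw [card_erase_of_mem hmin, hAm, Nat.add_sub_cancel])
          fun b hb => A.min'_lt_of_mem_erase_min' hne hb
      _ = k := (mem_filter.1 (hT (hA hmin))).2

theorem ramsey (κ : Type v) [Finite κ] (m M : ℕ) :
    ∃ N, ∀ c : (Fin m ↪o Fin N) → κ, ∃ g : Fin M ↪o Fin N,
      ∀ x y : Fin m ↪o Fin M, c (x.trans g) = c (y.trans g) := by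
  obtain ⟨N, hN⟩ := ramsey_finset (Option κ) m M
  refine ⟨N, fun c => ?_⟩
  obtain ⟨T, -, hT, k, hk⟩ := hN (univ : Finset (Fin N)) (by simp) fun A =>
    if h : #A = m then some (c (A.orderEmbOfFin h)) else none
  set g := T.orderEmbOfFin hT
  have color_eq : ∀ x : Fin m ↪o Fin M, some (c (x.trans g)) = k := fun x => by
    have hcard : #(univ.map (x.trans g).toEmbedding) = m := by simp
    have hsub : univ.map (x.trans g).toEmbedding ⊆ T := fun a ha => by
      obtain ⟨i, -, rfl⟩ := mem_map.1 ha
      exact T.orderEmbOfFin_mem hT (x i)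
    have := hk _ hsub hcard
    rwa [dif_pos hcard, ← orderEmbOfFin_unique' hcard (f := x.trans g)
      fun i => mem_map_of_mem _ (mem_univ i)] at this
  exact ⟨g, fun x y => Option.some_injective κ ((color_eq x).trans (color_eq y).symm)⟩

theorem ramsey_pairs (κ : Type v) [Finite κ] (M : ℕ) :
    ∃ N, ∀ c : Fin N → Fin N → κ, ∃ g : Fin M ↪o Fin N, ∀ i j i' j', i < j → i' < j' →
      c (g i) (g j) = c (g i') (g j') := by
  obtain ⟨N, hN⟩ := ramsey κ 2 M
  refine ⟨N, fun c => ?_⟩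
  obtain ⟨g, hg⟩ := hN fun x => c (x 0) (x 1)
  have pair_strictMono {i j : Fin M} (h : i < j) : StrictMono ![i, j] := by
    simpa [Fin.strictMono_iff_lt_succ] using h
  exact ⟨g, fun i j i' j' h h' => hg (.ofStrictMono _ (pair_strictMono h))
    (.ofStrictMono _ (pair_strictMono h'))⟩

theorem erdos_szekeres (K : ℕ) :
    ∃ N, ∀ {α : Type u} [LinearOrder α] (f : Fin N → α), Injective f →
      ∃ g : Fin K ↪o Fin N, StrictMono (f ∘ g) ∨ StrictAnti (f ∘ g) := by
  obtain ⟨N, hN⟩ := ramsey_pairs Prop K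
  refine ⟨N, fun f hf => ?_⟩
  obtain ⟨g, hg⟩ := hN fun i j => f i < f j
  refine ⟨g, or_iff_not_imp_left.2 fun hmono i j hij => ?_⟩
  obtain ⟨i', j', hij', hle⟩ : ∃ i' j', i' < j' ∧ ¬ f (g i') < f (g j') := by
    by_contra! h
    exact hmono fun i j => h i j
  rw [← hg i j i' j' hij hij'] at hle
  exact (not_lt.1 hle).lt_of_ne fun h => hij.ne' (g.injective (hf h))

end Ramsey

section Reachability

/-! ### Reachability inside a set of vertices -/

variable {W : Type u} {r r' : W → W → Prop} {X Y : Set W} {a b c : W}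

/-- The digraph induced by `r` on the vertex set `X`, kept on the original vertex type. -/
def restrict (r : W → W → Prop) (X : Set W) (u v : W) : Prop :=
  r u v ∧ u ∈ X ∧ v ∈ X

/-- `b` can be reached from `a` along edges of `r` through vertices of `X` only; in particular
both `a` and `b` lie in `X`. -/
def ReachIn (r : W → W → Prop) (X : Set W) (a b : W) : Prop :=
  a ∈ X ∧ ReflTransGen (restrict r X) a b

/-- `r` has a directed cycle all of whose vertices lie in `X`. -/
def HasCycleIn (r : W → W → Prop) (X : Set W) : Prop :=
  ∃ v, TransGen (restrict r X) v v

lemma restrict.mono (hr : r ≤ r') (hXY : X ⊆ Y) : restrict r X ≤ restrict r' Y :=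
  fun u v h => ⟨hr u v h.1, hXY h.2.1, hXY h.2.2⟩

lemma HasCycleIn.mono (h : HasCycleIn r X) (hXY : X ⊆ Y) : HasCycleIn r Y :=
  h.imp fun v => TransGen.mono (restrict.mono le_rfl hXY) v v

lemma hasCycleIn_restrict : HasCycleIn (restrict r X) Y ↔ HasCycleIn r (X ∩ Y) := by
  have : restrict (restrict r X) Y = restrict r (X ∩ Y) := by
    ext u v
    simp only [restrict, Set.mem_inter_iff]
    tauto
  rw [HasCycleIn, HasCycleIn, this]

namespace ReachIn

lemma mono (hr : r ≤ r') (hXY : X ⊆ Y) (h : ReachIn r X a b) : ReachIn r' Y a b :=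
  ⟨hXY h.1, ReflTransGen.mono (restrict.mono hr hXY) a b h.2⟩

lemma mono_set (hXY : X ⊆ Y) (h : ReachIn r X a b) : ReachIn r Y a b :=
  h.mono le_rfl hXY

lemma refl (ha : a ∈ X) : ReachIn r X a a :=
  ⟨ha, .refl⟩

lemma trans (hab : ReachIn r X a b) (hbc : ReachIn r X b c) : ReachIn r X a c :=
  ⟨hab.1, hab.2.trans hbc.2⟩

lemma single (ha : a ∈ X) (hb : b ∈ X) (hab : r a b) : ReachIn r X a b :=
  ⟨ha, .single ⟨hab, ha, hb⟩⟩

lemma mem_right (h : ReachIn r X a b) : b ∈ X := by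
  rcases h.2.cases_tail with rfl | ⟨_, -, huv⟩
  · exact h.1
  · exact huv.2.2

lemma induction {motive : W → Prop} (h : ReachIn r X a b) (refl : motive a)
    (tail : ∀ u v, ReachIn r X a u → v ∈ X → r u v → motive u → motive v) : motive b := by
  obtain ⟨ha, h⟩ := h
  induction h with
  | refl => exact refl
  | tail hu huv ih => exact tail _ _ ⟨ha, hu⟩ huv.2.2 huv.1 ih

lemma swap (h : ReachIn r X a b) : ReachIn (swap r) X b a :=
  h.induction (motive := fun v => ReachIn (Function.swap r) X v a) (refl h.1)
    fun _ _ hu hv huv ih => (single hv hu.mem_right huv).trans ih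

lemma le [Preorder W] (hr : r ≤ (· < ·)) (h : ReachIn r X a b) : a ≤ b :=
  h.induction le_rfl fun u v _ _ huv hu => hu.trans (hr u v huv).le

lemma inter_Icc [Preorder W] (hr : r ≤ (· < ·)) (h : ReachIn r X a b) :
    ReachIn r (X ∩ Set.Icc a b) a b := by
  refine h.induction (motive := fun v => ReachIn r (X ∩ Set.Icc a v) a v)
    (refl ⟨h.1, le_rfl, le_rfl⟩) fun u v hu hv huv ih => ?_
  have hle : u ≤ v := (hr u v huv).le
  exact (ih.mono_set (Set.inter_subset_inter_right X (Set.Icc_subset_Icc_right hle))).trans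
    (single ⟨hu.mem_right, hu.le hr, hle⟩ ⟨hv, (hu.le hr).trans hle, le_rfl⟩ huv)

end ReachIn

end Reachability

section Paths

/-! ### Paths and linkages in an acyclic digraph

The vertices are linearly ordered and every edge increases the order, so that a path is
determined by its set of vertices. -/

variable {W : Type u} [LinearOrder W] {r r' : W → W → Prop} {S P Q : Set W} {a b c d v : W}
  {ι : Type*} {κ : Type*}

/-- `S` is the vertex set of a directed path from `a` to `b`, expressed by saying that `S` is
linearly ordered by reachability inside `S`, with first vertex `a` and last vertex `b`. -/
structure IsPath (r : W → W → Prop) (S : Set W) (a b : W) : Prop where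
  isLeast : IsLeast S a
  isGreatest : IsGreatest S b
  reachIn : ∀ ⦃x⦄, x ∈ S → ∀ ⦃y⦄, y ∈ S → x ≤ y → ReachIn r S x y

/-- The sets `S i` are pairwise disjoint paths, the `i`-th one leading from `a i` to `b i`. -/
structure IsLinkage (r : W → W → Prop) (S : ι → Set W) (a b : ι → W) : Prop where
  isPath : ∀ i, IsPath r (S i) (a i) (b i)
  disjoint : Pairwise (Disjoint on S)

/-- There are pairwise disjoint paths from `a i` to `b i`. -/
def Linked (r : W → W → Prop) (a b : ι → W) : Prop :=
  ∃ S, IsLinkage r S a b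

namespace IsPath

lemma mono (h : IsPath r S a b) (hr : r ≤ r') : IsPath r' S a b :=
  ⟨h.isLeast, h.isGreatest, fun _ hx _ hy hxy => (h.reachIn hx hy hxy).mono hr subset_rfl⟩

lemma singleton (r : W → W → Prop) (a : W) : IsPath r {a} a a where
  isLeast := isLeast_singleton
  isGreatest := isGreatest_singleton
  reachIn := by
    rintro x rfl y rfl -
    exact .refl rfl

lemma reachIn_left (h : IsPath r S a b) (hv : v ∈ S) : ReachIn r S a v :=
  h.reachIn h.isLeast.1 hv (h.isLeast.2 hv)

lemma reachIn_right (h : IsPath r S a b) (hv : v ∈ S) : ReachIn r S v b :=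
  h.reachIn hv h.isGreatest.1 (h.isGreatest.2 hv)

lemma reachIn_ends (h : IsPath r S a b) : ReachIn r S a b :=
  h.reachIn_left h.isGreatest.1

lemma union (hr : r ≤ (· < ·)) (hP : IsPath r P a c) (hQ : IsPath r Q d b)
    (hcd : ReflGen r c d) : IsPath r (P ∪ Q) a b := by
  have hreach : ReachIn r (P ∪ Q) c d := by
    rcases hcd with _ | hcd
    · exact .refl (.inl hP.isGreatest.1)
    · exact .single (.inl hP.isGreatest.1) (.inr hQ.isLeast.1) hcd
  have reach_of_mem : ∀ x ∈ P, ∀ y ∈ Q, ReachIn r (P ∪ Q) x y := fun x hx y hy =>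
    (((hP.reachIn_right hx).mono_set Set.subset_union_left).trans hreach).trans
      ((hQ.reachIn_left hy).mono_set Set.subset_union_right)
  refine ⟨⟨.inl hP.isLeast.1, ?_⟩, ⟨.inr hQ.isGreatest.1, ?_⟩, ?_⟩
  · rintro x (hx | hx)
    · exact hP.isLeast.2 hx
    · exact (reach_of_mem a hP.isLeast.1 x hx).le hr
  · rintro x (hx | hx)
    · exact (reach_of_mem x hx b hQ.isGreatest.1).le hr
    · exact hQ.isGreatest.2 hx
  · rintro x (hx | hx) y (hy | hy) hxy
    · exact (hP.reachIn hx hy hxy).mono_set Set.subset_union_left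
    · exact reach_of_mem x hx y hy
    · rw [hxy.antisymm ((reach_of_mem y hy x hx).le hr)]
      exact .refl (.inl hy)
    · exact (hQ.reachIn hx hy hxy).mono_set Set.subset_union_right

lemma reachIn_compl_left {Z : Set W} (hr : r ≤ (· < ·)) (h : IsPath r S a b)
    (hZ : ∀ z ∈ Z, z ∈ S → z = b) (hv : v ∈ S) (hvZ : v ∉ Z) : ReachIn r Zᶜ a v := by
  refine ((h.reachIn_left hv).inter_Icc hr).mono_set ?_
  rintro w ⟨hw, -, hwv⟩ hwZ
  obtain rfl := hZ w hwZ hw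
  exact hvZ (hwv.antisymm (h.isGreatest.2 hv) ▸ hwZ)

lemma reachIn_compl_right {Z : Set W} (hr : r ≤ (· < ·)) (h : IsPath r S a b)
    (hZ : ∀ z ∈ Z, z ∈ S → z = a) (hv : v ∈ S) (hvZ : v ∉ Z) : ReachIn r Zᶜ v b := by
  refine ((h.reachIn_right hv).inter_Icc hr).mono_set ?_
  rintro w ⟨hw, hvw, -⟩ hwZ
  obtain rfl := hZ w hwZ hw
  exact hvZ ((h.isLeast.2 hv).antisymm hvw ▸ hwZ)

end IsPath

namespace IsLinkage

variable {S : ι → Set W} {a b : ι → W}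

lemma mono (h : IsLinkage r S a b) (hr : r ≤ r') : IsLinkage r' S a b :=
  ⟨fun i => (h.isPath i).mono hr, h.disjoint⟩

lemma comp (h : IsLinkage r S a b) {f : κ → ι} (hf : Injective f) :
    IsLinkage r (S ∘ f) (a ∘ f) (b ∘ f) :=
  ⟨fun i => h.isPath (f i), h.disjoint.comp_of_injective hf⟩

lemma eq_of_mem_of_mem (h : IsLinkage r S a b) {i j : ι} (hi : v ∈ S i) (hj : v ∈ S j) : i = j :=
  by_contra fun hij => Set.disjoint_left.1 (h.disjoint hij) hi hj

lemma source_injective (h : IsLinkage r S a b) : Injective a := fun i j hij =>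
  h.eq_of_mem_of_mem (h.isPath i).isLeast.1 (hij ▸ (h.isPath j).isLeast.1)

lemma target_injective (h : IsLinkage r S a b) : Injective b := fun i j hij =>
  h.eq_of_mem_of_mem (h.isPath i).isGreatest.1 (hij ▸ (h.isPath j).isGreatest.1)

end IsLinkage

end Paths

section Menger

/-! ### Menger's theorem for acyclic digraphs -/

variable {W : Type u} {r : W → W → Prop} {A B : Set W} {x y : W}

/-- Every path of `r` from `A` to `B` meets `Z`. -/
def IsSeparator (r : W → W → Prop) (A B Z : Set W) : Prop :=
  ∀ a ∈ A, ∀ b ∈ B, ¬ ReachIn r Zᶜ a b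

/-- The digraph `r` without the edge from `x` to `y`. -/
def deleteEdge (r : W → W → Prop) (x y : W) (u v : W) : Prop :=
  r u v ∧ ¬ (u = x ∧ v = y)

lemma deleteEdge_le : deleteEdge r x y ≤ r :=
  fun _ _ h => h.1

lemma deleteEdge_lt (h : r x y) : deleteEdge r x y < r :=
  lt_of_le_not_ge deleteEdge_le fun hle => (hle x y h).2 ⟨rfl, rfl⟩

lemma swap_deleteEdge : swap (deleteEdge r x y) = deleteEdge (swap r) y x := by
  ext u v
  simp only [swap, deleteEdge, and_comm]

lemma IsSeparator.swap {Z : Set W} (h : IsSeparator r A B Z) : IsSeparator (swap r) B A Z :=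
  fun b hb a ha hba => h a ha b hb hba.swap

lemma isSeparator_left (r : W → W → Prop) (A B : Set W) : IsSeparator r A B A :=
  fun _ ha _ _ h => h.1 ha

lemma IsSeparator.of_deleteEdge_left {Y Z : Set W} (hZ : IsSeparator (deleteEdge r x y) A B Z)
    (hY : IsSeparator (deleteEdge r x y) A (insert x Z) Y) : IsSeparator r A B Y := by
  intro a ha b hb h
  have haY : a ∈ Yᶜ := h.1
  suffices hreach : ReachIn (deleteEdge r x y) (Yᶜ ∩ Zᶜ) a b from
    hZ a ha b hb (hreach.mono_set Set.inter_subset_right)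
  refine h.induction (motive := ReachIn (deleteEdge r x y) (Yᶜ ∩ Zᶜ) a)
    (.refl ⟨haY, fun haZ => hY a ha a (.inr haZ) (.refl haY)⟩) fun u v _ hv huv ih => ?_
  have hau : ReachIn (deleteEdge r x y) Yᶜ a u := ih.mono_set Set.inter_subset_left
  have huv' : deleteEdge r x y u v := ⟨huv, fun h => hY a ha u (.inl h.1) hau⟩
  have hvZ : v ∉ Z := fun hvZ =>
    hY a ha v (.inr hvZ) (hau.trans (.single hau.mem_right hv huv'))
  exact ih.trans (.single ih.mem_right ⟨hv, hvZ⟩ huv')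

lemma IsSeparator.of_deleteEdge_right {Y Z : Set W} (hZ : IsSeparator (deleteEdge r x y) A B Z)
    (hY : IsSeparator (deleteEdge r x y) (insert y Z) B Y) : IsSeparator r A B Y := by
  have hZ' := hZ.swap
  have hY' := hY.swap
  rw [swap_deleteEdge] at hZ' hY'
  exact (hZ'.of_deleteEdge_left hY').swap

variable [LinearOrder W]

lemma exists_linkage_of_forall_not [Finite W] {n : ℕ} (hr : ∀ u v, ¬ r u v)
    (hsep : ∀ Z : Finset W, IsSeparator r A B Z → n ≤ #Z) :
    ∃ (S : Fin n → Set W) (a b : Fin n → W), IsLinkage r S a b ∧ (∀ i, a i ∈ A) ∧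
      ∀ i, b i ∈ B := by
  have hcard := hsep (Set.toFinite (A ∩ B)).toFinset fun a ha b hb h => by
    obtain rfl : a = b := h.induction rfl fun u v _ _ huv _ => (hr u v huv).elim
    exact h.1 (by simp [ha, hb])
  obtain ⟨Y, hY, hYn⟩ := exists_subset_card_eq hcard
  let f := Y.orderEmbOfFin hYn
  have hf : ∀ i, f i ∈ A ∩ B := fun i =>
    (Set.toFinite (A ∩ B)).mem_toFinset.1 (hY (Y.orderEmbOfFin_mem hYn i))
  exact ⟨fun i => {f i}, f, f, ⟨fun i => .singleton r (f i), fun i j hij =>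
    Set.disjoint_singleton.2 (f.injective.ne hij)⟩, fun i => (hf i).1, fun i => (hf i).2⟩

lemma IsLinkage.disjoint_of_not_reachIn {ι : Type*} (hr : r ≤ (· < ·)) {Z : Set W}
    {P Q : ι → Set W} {a b c d : ι → W} (hP : IsLinkage r P a c) (hQ : IsLinkage r Q d b)
    (hPZ : ∀ i, ∀ z ∈ Z, z ∈ P i → z = c i) (hQZ : ∀ i, ∀ z ∈ Z, z ∈ Q i → z = d i)
    (hcd : ∀ i j, c i ∈ Z → c i = d j → i = j) (hab : ∀ i j, ¬ ReachIn r Zᶜ (a i) (b j))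
    {i j : ι} (hij : i ≠ j) : Disjoint (P i) (Q j) := by
  refine Set.disjoint_left.2 fun v hvP hvQ => ?_
  by_cases hvZ : v ∈ Z
  · have hvc : v = c i := hPZ i v hvZ hvP
    exact hij (hcd i j (hvc ▸ hvZ) (hvc ▸ hQZ j v hvZ hvQ))
  · exact hab i j (((hP.isPath i).reachIn_compl_left hr (hPZ i) hvP hvZ).trans
      ((hQ.isPath j).reachIn_compl_right hr (hQZ j) hvQ hvZ))

lemma IsLinkage.exists_union_of_deleteEdge (hr : r ≤ (· < ·)) (hxy : r x y) {Z : Finset W} {n : ℕ}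
    {P Q : Fin n → Set W} {a b c d : Fin n → W}
    (hP : IsLinkage (deleteEdge r x y) P a c) (hQ : IsLinkage (deleteEdge r x y) Q d b)
    (hc : ∀ i, c i ∈ insert x Z) (hd : ∀ i, d i ∈ insert y Z) (hcardx : #(insert x Z) ≤ n)
    (hcardy : #(insert y Z) ≤ n) (hyZ : y ∉ Z)
    (hab : ∀ i j, ¬ ReachIn (deleteEdge r x y) (Z : Set W)ᶜ (a i) (b j)) :
    ∃ π : Fin n → Fin n, IsLinkage r (fun i => P i ∪ Q (π i)) a (b ∘ π) := by
  have hcsurj : Set.SurjOn c _ _ := surjOn_of_injOn_of_card_le (s := univ) c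
    (fun i _ => hc i) hP.target_injective.injOn (by simpa using hcardx)
  have hdsurj : Set.SurjOn d _ _ := surjOn_of_injOn_of_card_le (s := univ) d
    (fun i _ => hd i) hQ.source_injective.injOn (by simpa using hcardy)
  -- The path ending in `x` is continued along the edge to `y`, every other one at its own end.
  have hπ : ∀ i, ∃ j, (c i = x ∧ d j = y) ∨ (c i ∈ Z ∧ c i = d j) := fun i => by
    rcases mem_insert.1 (hc i) with h | h
    · obtain ⟨j, -, hj⟩ := hdsurj (mem_insert_self y Z)
      exact ⟨j, .inl ⟨h, hj⟩⟩
    · obtain ⟨j, -, hj⟩ := hdsurj (mem_insert_of_mem h)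
      exact ⟨j, .inr ⟨h, hj.symm⟩⟩
  choose π hπ using hπ
  have hcd : ∀ i j, c i ∈ Z → c i = d (π j) → i = j := fun i j hi hij =>
    hP.target_injective <| by grind
  have hπinj : Injective π := fun i j hij => hP.target_injective <| by grind
  have hQπ := hQ.comp hπinj
  have hPZ : ∀ i, ∀ z ∈ (Z : Set W), z ∈ P i → z = c i := fun i z hz hzi => by
    obtain ⟨j, -, rfl⟩ := hcsurj (mem_insert_of_mem hz)
    rw [hP.eq_of_mem_of_mem hzi (hP.isPath j).isGreatest.1]
  have hQZ : ∀ i, ∀ z ∈ (Z : Set W), z ∈ Q (π i) → z = d (π i) := fun i z hz hzi => by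
    obtain ⟨j, -, rfl⟩ := hdsurj (mem_insert_of_mem hz)
    rw [hQ.eq_of_mem_of_mem hzi (hQ.isPath j).isLeast.1]
  have hcross {i j : Fin n} (hij : i ≠ j) : Disjoint (P i) (Q (π j)) :=
    hP.disjoint_of_not_reachIn (deleteEdge_le.trans hr) hQπ hPZ hQZ hcd (fun i j => hab i (π j)) hij
  refine ⟨π, fun i => ((hP.mono deleteEdge_le).isPath i).union hr
    ((hQ.mono deleteEdge_le).isPath (π i)) ?_, fun i j hij => ?_⟩
  · rcases hπ i with ⟨hx, hy⟩ | ⟨-, h⟩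
    · exact .single (hx ▸ hy ▸ hxy)
    · exact h ▸ .refl
  · exact Set.disjoint_union_left.2
      ⟨Set.disjoint_union_right.2 ⟨hP.disjoint hij, hcross hij⟩,
        Set.disjoint_union_right.2 ⟨(hcross hij.symm).symm, hQπ.disjoint hij⟩⟩

theorem menger [Finite W] (hr : r ≤ (· < ·)) {n : ℕ}
    (hsep : ∀ Z : Finset W, IsSeparator r A B Z → n ≤ #Z) :
    ∃ (S : Fin n → Set W) (a b : Fin n → W), IsLinkage r S a b ∧ (∀ i, a i ∈ A) ∧
      ∀ i, b i ∈ B := by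
  induction r using WellFoundedLT.induction generalizing A B with
  | ind r ih =>
  by_cases hedge : ∃ x y, r x y
  swap
  · exact exists_linkage_of_forall_not (by simpa using hedge) hsep
  obtain ⟨x, y, hxy⟩ := hedge
  have ih' {A B : Set W} := ih (A := A) (B := B) _ (deleteEdge_lt hxy) (deleteEdge_le.trans hr)
  by_cases hsep' : ∀ Z : Finset W, IsSeparator (deleteEdge r x y) A B Z → n ≤ #Z
  · obtain ⟨S, a, b, hS, hab⟩ := ih' hsep'
    exact ⟨S, a, b, hS.mono deleteEdge_le, hab⟩
  push Not at hsep'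
  obtain ⟨Z, hZ, hZn⟩ := hsep'
  obtain ⟨P, a, c, hP, ha, hc⟩ := ih' (A := A) (B := insert x Z)
    fun Y hY => hsep Y (hZ.of_deleteEdge_left hY)
  obtain ⟨Q, d, b, hQ, hd, hb⟩ := ih' (A := insert y Z) (B := B)
    fun Y hY => hsep Y (hZ.of_deleteEdge_right hY)
  have hcard : n ≤ #(insert y Z) := hsep _ <| hZ.of_deleteEdge_right <| by
    rw [coe_insert]
    exact isSeparator_left _ _ _
  have hyZ : y ∉ Z := fun h => by rw [insert_eq_of_mem h] at hcard; omega
  obtain ⟨π, hπ⟩ := hP.exists_union_of_deleteEdge hr hxy hQ (fun i => by simpa using hc i)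
    (fun i => by simpa using hd i) ((card_insert_le x Z).trans hZn) ((card_insert_le y Z).trans hZn)
    hyZ fun i j => hZ _ (ha i) _ (hb j)
  exact ⟨_, a, b ∘ π, hπ, ha, fun i => hb (π i)⟩

end Menger

section Embeddings

/-! ### Halves and orientations -/

variable {ι : Type*} {m n K : ℕ}

/-- The identity or the reversal of `Fin K`. -/
def orient (ε : Bool) : Equiv.Perm (Fin K) :=
  bif ε then 1 else Fin.revPerm

lemma orient_orient (ε ε' : Bool) (l : Fin K) : orient ε (orient ε' l) = orient (ε == ε') l := by
  cases ε <;> cases ε' <;> simp [orient]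

/-- `i` precedes `j`, or follows it, according to the direction `dir`. -/
def Before [LT ι] : Bool → ι → ι → Prop
  | true, i, j => i < j
  | false, i, j => j < i

lemma Before.map [Preorder ι] {κ : Type*} [Preorder κ] (g : ι ↪o κ) {dir : Bool} {i j : ι}
    (h : Before dir i j) : Before dir (g i) (g j) := by
  cases dir <;> exact g.lt_iff_lt.2 h

lemma Before.ne [Preorder ι] {dir : Bool} {i j : ι} (h : Before dir i j) : i ≠ j := by
  cases dir
  · exact ne_of_gt h
  · exact ne_of_lt h

/-- The embedding of `Fin n` onto the lower (`true`) or upper (`false`) half of `Fin (n + n)`. -/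
def half : Bool → Fin n ↪o Fin (n + n)
  | true => Fin.castAddOrderEmb n
  | false => Fin.natAddOrderEmb n

lemma half_before (dir : Bool) (i j : Fin n) : Before dir (half dir i) (half (!dir) j) := by
  cases dir <;> simp [Before, half, Fin.lt_def] <;> omega

lemma exists_half_eq_true [LinearOrder ι] {x y : Fin n ↪o ι} (hxy : ∀ i j, x i < y j) :
    ∃ w : Fin (n + n) ↪o ι, (∀ i, w (half true i) = x i) ∧ ∀ i, w (half false i) = y i := by
  have hmono : StrictMono (Fin.append x y) := fun i j hij => by
    induction i using Fin.addCases with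
    | left i =>
      induction j using Fin.addCases with
      | left j => simpa only [Fin.append_left] using x.strictMono hij
      | right j => simpa only [Fin.append_left, Fin.append_right] using hxy i j
    | right i =>
      induction j using Fin.addCases with
      | left j => exact absurd hij (half_before true j i).not_gt
      | right j =>
        simpa only [Fin.append_right] using y.strictMono ((Fin.natAddOrderEmb n).lt_iff_lt.1 hij)
  exact ⟨.ofStrictMono _ hmono, Fin.append_left x y, Fin.append_right x y⟩

lemma exists_half_eq [LinearOrder ι] {dir : Bool} {x y : Fin n ↪o ι}
    (hxy : ∀ i j, Before dir (x i) (y j)) :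
    ∃ w : Fin (n + n) ↪o ι, (∀ i, w (half dir i) = x i) ∧ ∀ i, w (half (!dir) i) = y i := by
  cases dir with
  | true => exact exists_half_eq_true hxy
  | false => exact (exists_half_eq_true fun i j => hxy j i).imp fun _ => And.symm

end Embeddings

section UniformLinkages

/-! ### Linkages between indexed families of vertices -/

theorem exists_linked_orient (K : ℕ) :
    ∃ N, ∀ {W : Type u} [LinearOrder W] [Finite W] {r : W → W → Prop}, r ≤ (· < ·) →
      ∀ {ι κ : Type v} [LinearOrder ι] [LinearOrder κ] {p : ι → W} {q : κ → W},
      (∀ Z : Finset W, #Z < N → ∃ i j, ReachIn r (Z : Set W)ᶜ (p i) (q j)) →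
      ∃ (ε : Bool) (x : Fin K ↪o ι) (y : Fin K ↪o κ), Linked r (p ∘ x) (q ∘ y ∘ orient ε) := by
  obtain ⟨N, hN⟩ := erdos_szekeres K
  refine ⟨N, fun {W} _ _ r hr {ι κ} _ _ p q h => ?_⟩
  obtain ⟨S, a, b, hS, ha, hb⟩ := menger hr (n := N) (A := Set.range p) (B := Set.range q)
    fun Z hZ => by
      by_contra! hZN
      obtain ⟨i, j, hij⟩ := h Z hZN
      exact hZ _ ⟨i, rfl⟩ _ ⟨j, rfl⟩ hij
  choose α hα using ha
  choose β hβ using hb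
  obtain rfl : p ∘ α = a := funext hα
  obtain rfl : q ∘ β = b := funext hβ
  set σ := Tuple.sort α
  have hασ : StrictMono (α ∘ σ) := (Tuple.monotone_sort α).strictMono_of_injective
    (hS.source_injective.of_comp.comp σ.injective)
  have hβσ : Injective (β ∘ σ) := hS.target_injective.of_comp.comp σ.injective
  obtain ⟨g, hg⟩ := hN (β ∘ σ) hβσ
  have hlinked := hS.comp (σ.injective.comp g.injective)
  rcases hg with hg | hg
  · exact ⟨true, .ofStrictMono _ (hασ.comp g.strictMono), .ofStrictMono _ hg, _, hlinked⟩
  · refine ⟨false, .ofStrictMono _ (hασ.comp g.strictMono),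
      .ofStrictMono _ (hg.comp Fin.rev_strictAnti), S ∘ σ ∘ g, ?_⟩
    exact ⟨fun l => by simpa [orient] using hlinked.isPath l, hlinked.disjoint⟩

variable {W : Type u} {r : W → W → Prop} {ι κ : Type*} [LinearOrder ι] [LinearOrder κ]
  {p q : ι → W} {s K : ℕ} {dir : Bool}

/-- For any two blocks of `s` indices, the first one lying on the side `dir` of the second, no
fewer than `s` vertices separate the `p`-vertices of the first from the `q`-vertices of the
second. -/
def WeaklyLinked (r : W → W → Prop) (p q : ι → W) (s : ℕ) (dir : Bool) : Prop :=
  ∀ x y : Fin s ↪o ι, (∀ i j, Before dir (x i) (y j)) → ∀ Z : Finset W, #Z < s →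
    ∃ i j, ReachIn r (Z : Set W)ᶜ (p (x i)) (q (y j))

/-- For any two blocks of `K` indices, the first one lying on the side `dir` of the second, the
`p`-vertices of the first are linked to the `q`-vertices of the second, either always in order
or always in reverse order. -/
def UniformlyLinked [LinearOrder W] (r : W → W → Prop) (p q : ι → W) (K : ℕ) (dir : Bool) : Prop :=
  ∃ ε, ∀ x y : Fin K ↪o ι, (∀ i j, Before dir (x i) (y j)) →
    Linked r (p ∘ x) (q ∘ y ∘ orient ε)

lemma WeaklyLinked.comp (h : WeaklyLinked r p q s dir) (g : κ ↪o ι) :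
    WeaklyLinked r (p ∘ g) (q ∘ g) s dir := fun x y hxy =>
  h (x.trans g) (y.trans g) fun i j => (hxy i j).map g

lemma UniformlyLinked.comp [LinearOrder W] (h : UniformlyLinked r p q K dir) (g : κ ↪o ι) :
    UniformlyLinked r (p ∘ g) (q ∘ g) K dir :=
  h.imp fun _ hε x y hxy => hε (x.trans g) (y.trans g) fun i j => (hxy i j).map g

theorem exists_uniformlyLinked (K : ℕ) :
    ∃ s₀, ∀ s ≥ s₀, ∀ M, ∃ n, ∀ {W : Type u} [LinearOrder W] [Finite W] {r : W → W → Prop},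
      r ≤ (· < ·) → ∀ {p q : Fin n → W} {dir : Bool}, WeaklyLinked r p q s dir →
      ∃ g : Fin M ↪o Fin n, UniformlyLinked r (p ∘ g) (q ∘ g) K dir := by
  obtain ⟨s₀, hs₀⟩ := exists_linked_orient K
  refine ⟨s₀, fun s hs M => ?_⟩
  obtain ⟨n, hn⟩ := ramsey (Bool → Prop) (K + K) (max M (s + s))
  refine ⟨n, fun {W} _ _ r hr p q dir h => ?_⟩
  obtain ⟨g, hg⟩ := hn fun w ε =>
    Linked r (fun l => p (w (half dir l))) (fun l => q (w (half (!dir) (orient ε l))))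
  let left : Fin M ↪o Fin (max M (s + s)) := Fin.castLEOrderEmb (le_max_left _ _)
  let right : Fin (s + s) ↪o Fin (max M (s + s)) := Fin.castLEOrderEmb (le_max_right _ _)
  obtain ⟨ε, x, y, hxy⟩ := hs₀ hr fun Z hZ => (h.comp (right.trans g)) (half dir) (half (!dir))
    (half_before dir) Z (hZ.trans_le hs)
  obtain ⟨w, hwx, hwy⟩ := exists_half_eq (x := x.trans (half dir)) (y := y.trans (half (!dir)))
    fun i j => half_before dir (x i) (y j)
  refine ⟨left.trans g, ε, fun x' y' hxy' => ?_⟩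
  obtain ⟨w', hwx', hwy'⟩ := exists_half_eq hxy'
  have hcolor := congrFun (hg (w.trans right) (w'.trans left)) ε
  simp only [RelEmbedding.coe_trans, comp_apply, hwx, hwy, hwx', hwy'] at hcolor
  exact hcolor.mp hxy

end UniformLinkages

section Circuits

/-! ### Circuits of a digraph with identified terminals -/

variable {W : Type u} {ι : Type*}

/-- There are `k` pairwise disjoint sets with the property `P`. -/
def Packing (P : Set W → Prop) (k : ℕ) : Prop :=
  ∃ S : Fin k → Set W, Pairwise (Disjoint on S) ∧ ∀ i, P (S i)

lemma Packing.mono {P Q : Set W → Prop} (hPQ : ∀ X, P X → Q X) {k n : ℕ} (hkn : k ≤ n)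
    (h : Packing P n) : Packing Q k := by
  obtain ⟨S, hS, hP⟩ := h
  exact ⟨S ∘ Fin.castLE hkn, hS.comp_of_injective (Fin.castLE_injective hkn),
    fun i => hPQ _ (hP _)⟩

lemma Packing.cons {P : Set W → Prop} {k : ℕ} {X Y : Set W}
    (h : Packing (fun S => P (X ∩ S)) k) (hXY : Disjoint X Y) (hY : P Y) : Packing P (k + 1) := by
  obtain ⟨S, hS, hP⟩ := h
  refine ⟨Fin.cons Y fun i => X ∩ S i, ?_, Fin.cases hY hP⟩
  rw [pairwise_disjoint_on]
  intro i j hij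
  obtain ⟨j, rfl⟩ := Fin.exists_succ_eq_of_ne_zero (Fin.ne_zero_of_lt hij)
  cases i using Fin.cases with
  | zero => exact hXY.symm.mono_right Set.inter_subset_left
  | succ i =>
    exact (hS (Fin.succ_lt_succ_iff.1 hij).ne).mono Set.inter_subset_right Set.inter_subset_right

/-- After identifying `src i` with `snk i` for every `i`, the digraph `r` has a closed walk
through some terminal that stays inside `X`. -/
def HasCircuitIn (r : W → W → Prop) (src snk : ι → W) (X : Set W) : Prop :=
  ∃ i, TransGen (fun i j => ReachIn r X (src i) (snk j)) i i

/-- Disjoint index sets of equal size `n ≥ m` cannot be separated, from sources to sinks, by fewer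
than `n` vertices. -/
def WellLinked (r : W → W → Prop) (src snk : ι → W) (m : ℕ) : Prop :=
  ∀ I J : Finset ι, Disjoint I J → #I = #J → m ≤ #I → ∀ Z : Finset W, #Z < #I →
    ∃ i ∈ I, ∃ j ∈ J, ReachIn r (Z : Set W)ᶜ (src i) (snk j)

/-- There are two linkages of `q` paths each from sources to sinks such that every path of the
first meets every path of the second, and such that in neither of them an index occurs both at a
source and at a sink. -/
def HasCrossingLinkages [LinearOrder W] (r : W → W → Prop) (src snk : ι → W) (q : ℕ) : Prop :=
  ∃ (P Q : Fin q → Set W) (a b a' b' : Fin q → ι),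
    IsLinkage r P (src ∘ a) (snk ∘ b) ∧ IsLinkage r Q (src ∘ a') (snk ∘ b') ∧
    (∀ i j, a i ≠ b j) ∧ (∀ i j, a' i ≠ b' j) ∧ ∀ i j, ¬ Disjoint (P i) (Q j)

lemma HasCircuitIn.of_comp {κ : Type*} {r : W → W → Prop} {src snk : ι → W} {X : Set W}
    (g : κ → ι) (h : HasCircuitIn r (src ∘ g) (snk ∘ g) X) : HasCircuitIn r src snk X := by
  obtain ⟨i, hi⟩ := h
  exact ⟨g i, hi.lift g fun _ _ => id⟩

lemma HasCrossingLinkages.of_comp [LinearOrder W] {κ : Type*} {r : W → W → Prop}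
    {src snk : ι → W} {q : ℕ} {g : κ → ι} (hg : Injective g)
    (h : HasCrossingLinkages r (src ∘ g) (snk ∘ g) q) : HasCrossingLinkages r src snk q := by
  obtain ⟨P, Q, a, b, a', b', hP, hQ, hab, hab', hPQ⟩ := h
  exact ⟨P, Q, g ∘ a, g ∘ b, g ∘ a', g ∘ b', hP, hQ, fun i j => hg.ne (hab i j),
    fun i j => hg.ne (hab' i j), hPQ⟩

lemma WellLinked.exists_reachIn {κ : Type*} [Fintype κ] {r : W → W → Prop} {src snk : ι → W}
    {m : ℕ} (h : WellLinked r src snk m) {x y : κ → ι} (hx : Injective x) (hy : Injective y)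
    (hxy : ∀ i j, x i ≠ y j) (hm : m ≤ Fintype.card κ) {Z : Finset W} (hZ : #Z < Fintype.card κ) :
    ∃ i j, ReachIn r (Z : Set W)ᶜ (src (x i)) (snk (y j)) := by
  obtain ⟨i, hi, j, hj, hij⟩ := h (univ.map ⟨x, hx⟩) (univ.map ⟨y, hy⟩)
    (by simpa [disjoint_left] using fun i j => (hxy i j).symm) (by simp) (by simpa) Z (by simpa)
  obtain ⟨i, -, rfl⟩ := mem_map.1 hi
  obtain ⟨j, -, rfl⟩ := mem_map.1 hj
  exact ⟨i, j, hij⟩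

lemma WellLinked.weaklyLinked [LinearOrder ι] {r : W → W → Prop} {src snk : ι → W} {m s : ℕ}
    (h : WellLinked r src snk m) (hs : m ≤ s) (dir : Bool) : WeaklyLinked r src snk s dir :=
  fun x y hxy _ hZ => h.exists_reachIn x.injective y.injective (fun i j => (hxy i j).ne)
    (by simpa) (by simpa)

end Circuits

section WebOrCircuits

/-! ### Two crossing linkages or disjoint circuits -/

lemma WellLinked.exists_uniformlyLinked (K M m : ℕ) :
    ∃ N, ∀ {W : Type u} [LinearOrder W] [Finite W] {r : W → W → Prop}, r ≤ (· < ·) →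
      ∀ {src snk : Fin N → W}, WellLinked r src snk m →
      ∃ g : Fin M ↪o Fin N, ∀ dir, UniformlyLinked r (src ∘ g) (snk ∘ g) K dir := by
  obtain ⟨s, hs⟩ := ErdosPosa.exists_uniformlyLinked K
  obtain ⟨n, hn⟩ := hs (max s m) (le_max_left s m) M
  obtain ⟨N, hN⟩ := hs (max s m) (le_max_left s m) n
  refine ⟨N, fun hr src snk h => ?_⟩
  have hweak := h.weaklyLinked (le_max_right s m)
  obtain ⟨g, hg⟩ := hN hr (hweak true)
  obtain ⟨g₂, hg₂⟩ := hn hr ((hweak false).comp g)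
  refine ⟨g₂.trans g, fun dir => ?_⟩
  cases dir with
  | true => exact hg.comp g₂
  | false => exact hg₂

/-- A choice of linkages `P dir w` between the two halves of every block `w` of `K + K` indices,
in both directions, for which it depends only on `i` and `j` (as recorded by `crosses`) whether
the `i`-th path of one block meets the `j`-th path of a later block. -/
structure UniformSystem {W : Type u} [LinearOrder W] (r : W → W → Prop) {M : ℕ}
    (src snk : Fin M → W) (K : ℕ) where
  ε : Bool → Bool
  P : Bool → (Fin (K + K) ↪o Fin M) → Fin K → Set W
  crosses : Bool → Bool → Fin K → Fin K → Prop
  isLinkage : ∀ dir w, IsLinkage r (P dir w) (fun l => src (w (half dir l)))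
    (fun l => snk (w (half (!dir) (orient (ε dir) l))))
  crosses_iff : ∀ w w', (∀ i j, w i < w' j) → ∀ dir dir' i j,
    crosses dir dir' i j ↔ ¬ Disjoint (P dir w i) (P dir' w' j)

lemma exists_uniformSystem (K M m : ℕ) :
    ∃ N, ∀ {W : Type u} [LinearOrder W] [Finite W] {r : W → W → Prop}, r ≤ (· < ·) →
      ∀ {src snk : Fin N → W}, WellLinked r src snk m →
      ∃ g : Fin M ↪o Fin N, Nonempty (UniformSystem r (src ∘ g) (snk ∘ g) K) := by
  obtain ⟨n, hn⟩ := ramsey (Bool → Bool → Fin K → Fin K → Prop) ((K + K) + (K + K)) M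
  obtain ⟨N, hN⟩ := WellLinked.exists_uniformlyLinked K n m
  refine ⟨N, fun hr src snk h => ?_⟩
  obtain ⟨g, hg⟩ := hN hr h
  choose ε hε using hg
  choose P hP using fun dir (w : Fin (K + K) ↪o Fin n) =>
    hε dir ((half dir).trans w) ((half (!dir)).trans w) fun i j => (half_before dir i j).map w
  obtain ⟨f, hf⟩ := hn fun z dir dir' i j =>
    ¬ Disjoint (P dir ((half true).trans z) i) (P dir' ((half false).trans z) j)
  refine ⟨f.trans g, ⟨ε, fun dir w => P dir (w.trans f), fun dir dir' i j =>
    ∃ w w' : Fin (K + K) ↪o Fin M, (∀ a b, w a < w' b) ∧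
      ¬ Disjoint (P dir (w.trans f) i) (P dir' (w'.trans f) j),
    fun dir w => hP dir (w.trans f), fun w w' hw dir dir' i j =>
      ⟨?_, fun hij => ⟨w, w', hw, hij⟩⟩⟩⟩
  rintro ⟨v, v', hv, hij⟩
  obtain ⟨y, hyw, hyw'⟩ := exists_half_eq_true hw
  obtain ⟨x, hxv, hxv'⟩ := exists_half_eq_true hv
  have halves_eq {w : Fin (K + K) ↪o Fin M} {z : Fin ((K + K) + (K + K)) ↪o Fin M} (b : Bool)
      (hz : ∀ i, z (half b i) = w i) : (half b).trans (z.trans f) = w.trans f := by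
    ext i
    simp [hz]
  have hcolor := congrFun (congrFun (congrFun (congrFun (hf x y) dir) dir') i) j
  rw [halves_eq true hxv, halves_eq false hxv', halves_eq true hyw, halves_eq false hyw'] at hcolor
  exact hcolor.mp hij

/-- The embedding of `Fin m` onto the `u`-th of `k` consecutive blocks of length `m`. -/
def block {k m : ℕ} (u : Fin k) : Fin m ↪o Fin (k * m) :=
  .ofStrictMono (fun x => finProdFinEquiv (u, x)) fun x y hxy => by
    change x + m * u < y + m * u
    exact Nat.add_lt_add_right hxy _

lemma block_lt_block {k m : ℕ} {u v : Fin k} (huv : u < v) (x y : Fin m) :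
    block u x < block v y := by
  have hmul : m * (u + 1) ≤ m * v := Nat.mul_le_mul_left m huv
  have hx := x.isLt
  rw [mul_add_one] at hmul
  change x + m * u < y + m * v
  omega

/-- The order embedding of `Fin K` into `Fin (K + K)` that is a translation and takes the
value `K` at `i`. -/
def centered {K : ℕ} (i : Fin K) : Fin K ↪o Fin (K + K) :=
  .ofStrictMono (fun l => ⟨K + l - i, by omega⟩) fun l l' h => by
    simp only [Fin.lt_def] at h ⊢
    omega

lemma centered_self {K : ℕ} (i : Fin K) : centered i i = ⟨K, by have := i.pos; omega⟩ :=
  Fin.ext (Nat.add_sub_cancel K i)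

namespace UniformSystem

variable {W : Type u} [LinearOrder W] {r : W → W → Prop} {M K q : ℕ} {src snk : Fin M → W}

lemma hasCrossingLinkages (U : UniformSystem r src snk K) {w w' : Fin (K + K) ↪o Fin M}
    (hw : ∀ i j, w i < w' j) {dir dir' : Bool} {x y : Fin q ↪o Fin K}
    (hxy : ∀ i j, U.crosses dir dir' (x i) (y j)) : HasCrossingLinkages r src snk q :=
  ⟨_, _, _, _, _, _, (U.isLinkage dir w).comp x.injective, (U.isLinkage dir' w').comp y.injective,
    fun _ _ => ((half_before dir _ _).map w).ne, fun _ _ => ((half_before dir' _ _).map w').ne,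
    fun i j => (U.crosses_iff w w' hw dir dir' (x i) (y j)).1 (hxy i j)⟩

/-- Inside its block, every path can be moved to lead from one fixed index to another. -/
lemma exists_block_reachIn {m : ℕ} {src snk : Fin (m * ((K + K) + (K + K))) → W}
    (U : UniformSystem r src snk K) (dir : Bool) (u : Fin m) (l : Fin K) :
    ∃ w : Fin (K + K) ↪o Fin ((K + K) + (K + K)),
      ReachIn r (U.P dir (w.trans (block u)) l)
        (src (block u (half dir ⟨K, by have := l.pos; omega⟩)))
        (snk (block u (half (!dir) ⟨K, by have := l.pos; omega⟩))) := by
  obtain ⟨w, hw, hw'⟩ := exists_half_eq (x := (centered l).trans (half dir))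
    (y := (centered (orient (U.ε dir) l)).trans (half (!dir))) fun i j => half_before dir _ _
  refine ⟨w, ?_⟩
  simpa [hw, hw', centered_self] using ((U.isLinkage dir (w.trans (block u))).isPath l).reachIn_ends

lemma packing_hasCircuitIn {m : ℕ} {src snk : Fin (m * ((K + K) + (K + K))) → W}
    (U : UniformSystem r src snk K) (l : Fin m → Fin K)
    (hl : ∀ u v, u < v → ∀ dir dir', ¬ U.crosses dir dir' (l u) (l v)) :
    Packing (HasCircuitIn r src snk) m := by
  choose w hw using fun u dir => U.exists_block_reachIn dir u (l u)
  let T (u : Fin m) (dir : Bool) : Set W := U.P dir ((w u dir).trans (block u)) (l u)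
  have hdisj : ∀ u v, u < v → Disjoint (⋃ dir, T u dir) (⋃ dir, T v dir) := fun u v huv => by
    refine Set.disjoint_iUnion_left.2 fun dir => Set.disjoint_iUnion_right.2 fun dir' => ?_
    refine not_not.1 <| (U.crosses_iff _ _ (fun i j => block_lt_block huv _ _) dir dir' _ _).not.1
      (hl u v huv dir dir')
  refine ⟨fun u => ⋃ dir, T u dir, fun u v huv => ?_, fun u => ?_⟩
  · rcases huv.lt_or_gt with h | h
    · exact hdisj u v h
    · exact (hdisj v u h).symm
  · exact ⟨_, .trans (.single ((hw u true).mono_set (Set.subset_iUnion (T u) true)))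
      (.single ((hw u false).mono_set (Set.subset_iUnion (T u) false)))⟩

end UniformSystem

theorem packing_hasCircuitIn_or_hasCrossingLinkages (k q m : ℕ) :
    ∃ N, ∀ {W : Type u} [LinearOrder W] [Finite W] {r : W → W → Prop}, r ≤ (· < ·) →
      ∀ {src snk : Fin N → W}, WellLinked r src snk m →
      Packing (HasCircuitIn r src snk) k ∨ HasCrossingLinkages r src snk q := by
  obtain ⟨K, hK⟩ := ramsey_pairs (Bool → Bool → Prop) (max (k + 2) (q + q))
  obtain ⟨N, hN⟩ := exists_uniformSystem K ((k + 2) * ((K + K) + (K + K))) m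
  refine ⟨N, fun hr src snk h => ?_⟩
  obtain ⟨g, ⟨U⟩⟩ := hN hr h
  obtain ⟨pos, hpos⟩ := hK fun i j dir dir' => U.crosses dir dir' i j
  by_cases hcross : ∃ i j dir dir', i < j ∧ U.crosses dir dir' (pos i) (pos j)
  · obtain ⟨i, j, dir, dir', hij, hcross⟩ := hcross
    let e : Fin (q + q) ↪o Fin K := (Fin.castLEOrderEmb (le_max_right _ _)).trans pos
    refine .inr (.of_comp g.injective <| U.hasCrossingLinkages
      (w := (half true).trans (block 0)) (w' := (half true).trans (block 1))
      (fun _ _ => block_lt_block Fin.zero_lt_one _ _) (dir := dir) (dir' := dir')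
      (x := (half true).trans e) (y := (half false).trans e) fun a b => ?_)
    exact (congrFun₂ (hpos i j _ _ hij (half_before true a b)) dir dir').mp hcross
  · push Not at hcross
    refine .inl <| .mono (fun _ => .of_comp g) (Nat.le_add_right k 2) <|
      U.packing_hasCircuitIn (pos ∘ Fin.castLE (le_max_left _ _)) fun u v huv dir dir' =>
        hcross _ _ dir dir' huv

end WebOrCircuits

section Cutting

/-! ### Cutting a web in two -/

variable {α : Type*} [LinearOrder α]

lemma before_not {dir : Bool} {a b : α} : Before (!dir) a b ↔ Before dir b a := by
  cases dir <;> rfl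

lemma exists_before {ι : Type*} {x y : ι → α} (hne : ∀ i, x i ≠ y i)
    (hxy : ∀ i j, (x i < y i) = (x j < y j)) : ∃ dir, ∀ i, Before dir (x i) (y i) := by
  by_cases h : ∃ i, x i < y i
  · obtain ⟨i, hi⟩ := h
    exact ⟨true, fun j => (hxy i j).mp hi⟩
  · push Not at h
    exact ⟨false, fun i => (h i).lt_of_ne' (hne i)⟩

/-- Restricted to `n` columns, `m` rows of `τ` lie entirely below some value `θ` and `m` rows lie
entirely above it. -/
def HasCut {ι κ : Type*} (τ : ι → κ → α) (m n : ℕ) : Prop :=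
  ∃ (θ : α) (ρ ρ' : Fin m ↪ ι) (f : Fin n ↪ κ),
    (∀ i j, τ (ρ i) (f j) < θ) ∧ ∀ i j, θ < τ (ρ' i) (f j)

lemma HasCut.of_before {ι κ : Type*} {τ : ι → κ → α} {m n : ℕ} {dir : Bool} {θ : α}
    {ρ ρ' : Fin m ↪ ι} {f : Fin n ↪ κ} (h : ∀ i j, Before dir (τ (ρ i) (f j)) θ)
    (h' : ∀ i j, Before dir θ (τ (ρ' i) (f j))) : HasCut τ m n := by
  cases dir with
  | true => exact ⟨θ, ρ, ρ', f, h, h'⟩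
  | false => exact ⟨θ, ρ', ρ, f, h', h⟩

/-- The embedding of `Fin m` onto the interval of length `m` starting at `o`. -/
def shift {m n : ℕ} (o : ℕ) (h : o + m ≤ n) : Fin m ↪o Fin n :=
  (Fin.natAddOrderEmb o).trans (Fin.castLEOrderEmb h)

lemma ramsey_crossings (L : ℕ) :
    ∃ q, ∀ {α : Type u} [LinearOrder α] {τ : Fin q → Fin q → α},
      (∀ i i' j j', i ≠ i' → τ i j ≠ τ i' j') →
      ∃ (g : Fin L ↪o Fin q) (dir dir' : Bool), ∀ a b c d, a < b → b < c → c < d →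
        Before dir (τ (g a) (g c)) (τ (g b) (g d)) ∧
          Before dir' (τ (g a) (g d)) (τ (g b) (g c)) := by
  obtain ⟨q, hq⟩ := ramsey (Prop × Prop) 4 L
  refine ⟨q, fun {α} _ τ hτ => ?_⟩
  obtain ⟨g, hg⟩ := hq fun x =>
    (τ (x 0) (x 2) < τ (x 1) (x 3), τ (x 0) (x 3) < τ (x 1) (x 2))
  have hne (x : Fin 4 ↪o Fin L) (j j' : Fin q) : τ (g (x 0)) j ≠ τ (g (x 1)) j' :=
    hτ _ _ _ _ (g.injective.ne (x.injective.ne (by decide)))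
  obtain ⟨dir, hdir⟩ := exists_before (x := fun x : Fin 4 ↪o Fin L => τ (g (x 0)) (g (x 2)))
    (fun x => hne x _ _) fun x y => congrArg Prod.fst (hg x y)
  obtain ⟨dir', hdir'⟩ := exists_before (x := fun x : Fin 4 ↪o Fin L => τ (g (x 0)) (g (x 3)))
    (fun x => hne x _ _) fun x y => congrArg Prod.snd (hg x y)
  refine ⟨g, dir, dir', fun a b c d hab hbc hcd => ?_⟩
  have hmono : StrictMono ![a, b, c, d] := by
    simp [Fin.strictMono_iff_lt_succ, Fin.forall_fin_succ, hab, hbc, hcd]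
  exact ⟨hdir (.ofStrictMono _ hmono), hdir' (.ofStrictMono _ hmono)⟩

theorem exists_hasCut (m n : ℕ) :
    ∃ q, ∀ {α : Type u} [LinearOrder α] {τ : Fin q → Fin q → α},
      (∀ i i' j j', i ≠ i' → τ i j ≠ τ i' j') → HasCut τ m n ∨ HasCut (swap τ) m n := by
  obtain ⟨q, hq⟩ := ramsey_crossings (2 * m + n + 2)
  refine ⟨q, fun {α} _ τ hτ => ?_⟩
  obtain ⟨g, dir, dir', hg⟩ := hq hτ
  let interval {l : ℕ} (o : ℕ) (h : o + l ≤ 2 * m + n + 2) : Fin l ↪ Fin q :=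
    ((shift o h).trans g).toEmbedding
  have hcross (a b c d : ℕ) (hab : a < b) (hbc : b < c) (hcd : c < d) (hd : d < 2 * m + n + 2) :=
    hg ⟨a, by omega⟩ ⟨b, by omega⟩ ⟨c, by omega⟩ ⟨d, hd⟩ hab hbc hcd
  obtain rfl | rfl : dir' = dir ∨ dir' = !dir := by cases dir <;> cases dir' <;> simp
  · exact .inl <| .of_before
      (θ := τ (g ⟨m, by omega⟩) (g ⟨2 * m + 1 + n, by omega⟩))
      (ρ := interval 0 (by omega)) (ρ' := interval (m + 1) (by omega))
      (f := interval (2 * m + 1) (by omega))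
      (fun i j => (hcross (0 + i) m (2 * m + 1 + j) (2 * m + 1 + n)
        (by omega) (by omega) (by omega) (by omega)).1)
      (fun i j => (hcross m (m + 1 + i) (2 * m + 1 + j) (2 * m + 1 + n)
        (by omega) (by omega) (by omega) (by omega)).2)
  · exact .inr <| .of_before
      (θ := τ (g ⟨n, by omega⟩) (g ⟨n + 1 + m, by omega⟩))
      (ρ := interval (n + 1) (by omega)) (ρ' := interval (n + 2 + m) (by omega))
      (f := interval 0 (by omega))
      (fun i j => (hcross (0 + j) n (n + 1 + i) (n + 1 + m)
        (by omega) (by omega) (by omega) (by omega)).1)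
      (fun i j => before_not.1 (hcross (0 + j) n (n + 1 + m) (n + 2 + m + i)
        (by omega) (by omega) (by omega) (by omega)).2)

theorem exists_monotone_rows (s n : ℕ) :
    ∃ n', ∀ {α : Type u} [LinearOrder α] {τ : Fin (2 * s) → Fin n' → α},
      (∀ i, Injective (τ i)) → ∃ (dir : Bool) (ρ : Fin s ↪ Fin (2 * s)) (f : Fin n ↪o Fin n'),
        ∀ i j j', Before dir j j' → τ (ρ i) (f j) < τ (ρ i) (f j') := by
  obtain ⟨n', hn'⟩ := ramsey (Fin (2 * s) → Prop) 2 n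
  refine ⟨n', fun {α} _ τ hτ => ?_⟩
  obtain ⟨f, hf⟩ := hn' fun x i => τ i (x 0) < τ i (x 1)
  choose δ hδ using fun i => exists_before (x := fun x : Fin 2 ↪o Fin n => τ i (f (x 0)))
    (fun x => (hτ i).ne (f.injective.ne (x.injective.ne zero_ne_one)))
    fun x y => congrFun (hf x y) i
  obtain ⟨dir, hdir⟩ := Fintype.exists_le_card_fiber_of_mul_le_card δ (n := s) (by simp)
  obtain ⟨R, hR, hcard⟩ := exists_subset_card_eq hdir
  refine ⟨dir, (R.orderEmbOfFin hcard).toEmbedding, f, fun i j j' hjj' => ?_⟩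
  have hδi : δ (R.orderEmbOfFin hcard i) = dir :=
    (mem_filter.1 (hR (orderEmbOfFin_mem R hcard i))).2
  have hrow {j j' : Fin n} (h : j < j') := hδi ▸ hδ (R.orderEmbOfFin hcard i)
    (.ofStrictMono ![j, j'] (by simpa [Fin.strictMono_iff_lt_succ] using h))
  cases dir with
  | true => exact hrow hjj'
  | false => exact hrow hjj'

end Cutting

section Columns

/-! ### Columns -/

variable {W : Type u} {r : W → W → Prop} {ι κ : Type*} {s : ℕ}

open Classical in
lemma card_filter_not_disjoint_le [Fintype ι] {S : ι → Set W} (hS : Pairwise (Disjoint on S))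
    (Z : Finset W) : #{i | ¬ Disjoint (S i) (Z : Set W)} ≤ #Z := by
  refine card_le_card_of_forall_subsingleton (fun i z => z ∈ S i) (fun i hi => ?_)
    fun z _ i hi j hj => by_contra fun hij => Set.disjoint_left.1 (hS hij) hi.2 hj.2
  obtain ⟨z, hzS, hzZ⟩ := Set.not_disjoint_iff.1 (mem_filter.1 hi).2
  exact ⟨z, hzZ, hzS⟩

lemma exists_subset_compl_of_card_lt [Fintype ι] {S : ι → Set W} (hS : Pairwise (Disjoint on S))
    {Z : Finset W} (hZ : #Z < Fintype.card ι) : ∃ i, S i ⊆ (Z : Set W)ᶜ := by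
  classical
  by_contra! h
  have hall : ∀ i, ¬ Disjoint (S i) (Z : Set W) := fun i =>
    mt Set.subset_compl_iff_disjoint_right.2 (h i)
  have := card_filter_not_disjoint_le hS Z
  rw [filter_true_of_mem fun i _ => hall i, card_univ] at this
  omega

/-- Follow a column to a row, the row to another column, and this column to its end. -/
lemma IsLinkage.weaklyLinked [LinearOrder W] [LinearOrder ι] {R : Fin s → Set W} {a b : Fin s → W}
    (hR : IsLinkage r R a b) {K : ι → Set W} (hK : Pairwise (Disjoint on K)) {w : Fin s → ι → W}
    (hw : ∀ i j, w i j ∈ R i) {p q : ι → W} (hp : ∀ i j, ReachIn r (K j) (p j) (w i j))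
    (hq : ∀ i j, ReachIn r (K j) (w i j) (q j)) {dir : Bool}
    (hmono : ∀ i j j', Before dir j j' → w i j < w i j') : WeaklyLinked r p q s dir := by
  intro x y hxy Z hZ
  obtain ⟨l, hl⟩ := exists_subset_compl_of_card_lt hR.disjoint (Z := Z) (by simpa)
  obtain ⟨i, hi⟩ := exists_subset_compl_of_card_lt (hK.comp_of_injective x.injective)
    (Z := Z) (by simpa)
  obtain ⟨j, hj⟩ := exists_subset_compl_of_card_lt (hK.comp_of_injective y.injective)
    (Z := Z) (by simpa)
  have hrow : ReachIn r (R l) (w l (x i)) (w l (y j)) :=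
    (hR.isPath l).reachIn (hw l _) (hw l _) (hmono l _ _ (hxy i j)).le
  exact ⟨i, j, (((hp l (x i)).mono_set hi).trans (hrow.mono_set hl)).trans
    ((hq l (y j)).mono_set hj)⟩

lemma IsPath.exists_edge_across [LinearOrder W] [Finite W] (hr : r ≤ (· < ·)) {S : Set W}
    {a b x y θ : W} (h : IsPath r S a b) (hx : x ∈ S) (hxθ : x ≤ θ) (hy : y ∈ S) (hyθ : θ < y) :
    ∃ z z', r z z' ∧ IsGreatest (S ∩ Set.Iic θ) z ∧ IsLeast (S ∩ Set.Ioi θ) z' := by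
  obtain ⟨z, hz, hzmax⟩ := Set.exists_max_image (S ∩ Set.Iic θ) id (Set.toFinite _) ⟨x, hx, hxθ⟩
  obtain ⟨z', hz', hzmin⟩ := Set.exists_min_image (S ∩ Set.Ioi θ) id (Set.toFinite _) ⟨y, hy, hyθ⟩
  refine ⟨z, z', ?_, ⟨hz, hzmax⟩, ⟨hz', hzmin⟩⟩
  have hlt : z < z' := lt_of_le_of_lt hz.2 hz'.2
  obtain ⟨-, hreach⟩ := h.reachIn hz.1 hz'.1 hlt.le
  obtain heq | ⟨w, ⟨hzw, -, hwS⟩, hwz'⟩ := hreach.cases_head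
  · exact absurd heq hlt.ne
  have hwθ : θ < w := not_le.1 fun hle => (hr z w hzw).not_ge (hzmax w ⟨hwS, hle⟩)
  have hle : w ≤ z' := ReachIn.le hr ⟨hwS, hwz'⟩
  exact (hle.antisymm (hzmin w ⟨hwS, hwθ⟩)) ▸ hzw

/-- What is retained of disjoint paths (the columns) crossing a common cut: the `j`-th of them leads
from the source `c j` to the sink `d j` and crosses the cut along the edge `z j → z' j`. -/
structure IsColumns [LT W] (r : W → W → Prop) (c d : κ → ι) (z z' : κ → W) : Prop where
  injective_left : Injective c
  injective_right : Injective d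
  ne : ∀ i j, c i ≠ d j
  edge : ∀ j, r (z j) (z' j)
  lt : ∀ i j, z i < z' j

lemma IsColumns.comp [LT W] {κ' : Type*} {c d : κ → ι} {z z' : κ → W}
    (h : IsColumns r c d z z') {g : κ' → κ} (hg : Injective g) :
    IsColumns r (c ∘ g) (d ∘ g) (z ∘ g) (z' ∘ g) :=
  ⟨h.injective_left.comp hg, h.injective_right.comp hg, fun _ _ => h.ne _ _, fun _ => h.edge _,
    fun _ _ => h.lt _ _⟩

/-- There are `n` columns whose halves before and after the cut are both weakly linked with
parameter `s`. -/
def HasColumns [LinearOrder W] (r : W → W → Prop) (src snk : ι → W) (s n : ℕ) : Prop :=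
  ∃ (c d : Fin n → ι) (z z' : Fin n → W) (dir dir' : Bool), IsColumns r c d z z' ∧
    WeaklyLinked r (src ∘ c) z s dir ∧ WeaklyLinked r z' (snk ∘ d) s dir'

lemma exists_hasColumns_of_hasCut (s n : ℕ) (hs : 0 < s) :
    ∃ n', ∀ {W : Type u} [LinearOrder W] [Finite W] {r : W → W → Prop}, r ≤ (· < ·) →
      ∀ {ι : Type v} {src snk : ι → W} {q : ℕ} {R K : Fin q → Set W} {a b : Fin q → W}
        {c d : Fin q → ι} {w : Fin q → Fin q → W}, IsLinkage r R a b →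
        IsLinkage r K (src ∘ c) (snk ∘ d) → (∀ i j, c i ≠ d j) →
        (∀ i j, w i j ∈ R i ∧ w i j ∈ K j) → HasCut w (2 * s) n' → HasColumns r src snk s n := by
  obtain ⟨n₁, hn₁⟩ := exists_monotone_rows s n
  obtain ⟨n₂, hn₂⟩ := exists_monotone_rows s n₁
  refine ⟨n₂, fun {W} _ _ r hr {ι src snk q R K a b c d w} hR hK hcd hw hcut => ?_⟩
  obtain ⟨θ, ρ, ρ', f, hlo, hhi⟩ := hcut
  have hinj (i : Fin q) : Injective (w i) := fun j j' hjj' =>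
    hK.eq_of_mem_of_mem (hw i j).2 (hjj' ▸ (hw i j').2)
  obtain ⟨dir, σ, f₁, hmono⟩ := hn₂ (τ := fun i j => w (ρ i) (f j)) fun i =>
    (hinj _).comp f.injective
  obtain ⟨dir', σ', f₂, hmono'⟩ := hn₁ (τ := fun i j => w (ρ' i) (f (f₁ j))) fun i =>
    (hinj _).comp (f.injective.comp f₁.injective)
  let F : Fin n ↪ Fin q := (f₂.trans f₁).toEmbedding.trans f
  choose z z' hedge hz hz' using fun j => (hK.isPath (F j)).exists_edge_across hr
    (hw _ _).2 (hlo (σ ⟨0, hs⟩) (f₁ (f₂ j))).le (hw _ _).2 (hhi (σ' ⟨0, hs⟩) (f₁ (f₂ j)))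
  have hKF : IsLinkage r (K ∘ F) (src ∘ c ∘ F) (snk ∘ d ∘ F) := hK.comp F.injective
  refine ⟨c ∘ F, d ∘ F, z, z', dir, dir', ⟨hKF.source_injective.of_comp,
    hKF.target_injective.of_comp, fun _ _ => hcd _ _, hedge,
    fun i j => lt_of_le_of_lt (hz i).1.2 (hz' j).1.2⟩, ?_, ?_⟩
  · exact (hR.comp (σ.trans ρ).injective).weaklyLinked hKF.disjoint
      (w := fun i j => w (ρ (σ i)) (F j)) (fun i j => (hw _ _).1)
      (fun i j => (hKF.isPath j).reachIn_left (hw _ _).2)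
      (fun i j => (hKF.isPath j).reachIn (hw _ _).2 (hz j).1.1
        ((hz j).2 ⟨(hw _ _).2, (hlo _ _).le⟩))
      fun i j j' hjj' => hmono i _ _ (hjj'.map f₂)
  · exact (hR.comp (σ'.trans ρ').injective).weaklyLinked hKF.disjoint
      (w := fun i j => w (ρ' (σ' i)) (F j)) (fun i j => (hw _ _).1)
      (fun i j => (hKF.isPath j).reachIn (hz' j).1.1 (hw _ _).2
        ((hz' j).2 ⟨(hw _ _).2, hhi _ _⟩))
      (fun i j => (hKF.isPath j).reachIn_right (hw _ _).2) hmono'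

theorem exists_hasColumns (s n : ℕ) (hs : 0 < s) :
    ∃ q, ∀ {W : Type u} [LinearOrder W] [Finite W] {r : W → W → Prop}, r ≤ (· < ·) →
      ∀ {ι : Type v} {src snk : ι → W}, HasCrossingLinkages r src snk q →
      HasColumns r src snk s n := by
  obtain ⟨n', hn'⟩ := exists_hasColumns_of_hasCut s n hs
  obtain ⟨q, hq⟩ := exists_hasCut (2 * s) n'
  refine ⟨q, fun {W} _ _ r hr {ι src snk} ⟨P, Q, a, b, a', b', hP, hQ, hab, hab', hPQ⟩ => ?_⟩
  choose w hw using fun i j => Set.not_disjoint_iff.1 (hPQ i j)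
  have hne : ∀ i i' j j', i ≠ i' → w i j ≠ w i' j' := fun i i' j j' hne heq =>
    hne (hP.eq_of_mem_of_mem (hw i j).1 (heq ▸ (hw i' j').1))
  rcases hq hne with hcut | hcut
  · exact hn' hr hP hQ hab' hw hcut
  · exact hn' hr hQ hP hab (fun i j => (hw j i).symm) hcut

end Columns

section UniformColumns

/-! ### Uniform columns -/

lemma exists_forall_uniformlyLinked (𝒦 : Finset ℕ) :
    ∃ s₀, ∀ s ≥ s₀, ∀ M, ∃ n, ∀ {W : Type u} [LinearOrder W] [Finite W] {r : W → W → Prop},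
      r ≤ (· < ·) → ∀ {p q : Fin n → W} {dir : Bool}, WeaklyLinked r p q s dir →
      ∃ g : Fin M ↪o Fin n, ∀ K ∈ 𝒦, UniformlyLinked r (p ∘ g) (q ∘ g) K dir := by
  induction 𝒦 using Finset.induction_on with
  | empty => exact ⟨0, fun s _ M => ⟨M, fun _ _ _ _ _ => ⟨RelEmbedding.refl _, by simp⟩⟩⟩
  | insert K 𝒦 _ ih =>
    obtain ⟨s₁, hs₁⟩ := exists_uniformlyLinked K
    obtain ⟨s₂, hs₂⟩ := ih
    refine ⟨max s₁ s₂, fun s hs M => ?_⟩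
    obtain ⟨n, hn⟩ := hs₁ s (le_of_max_le_left hs) M
    obtain ⟨n', hn'⟩ := hs₂ s (le_of_max_le_right hs) n
    refine ⟨n', fun hr p q dir h => ?_⟩
    obtain ⟨g', hg'⟩ := hn' hr h
    obtain ⟨g, hg⟩ := hn hr (h.comp g')
    exact ⟨g.trans g', forall_mem_insert _ _ _ |>.2 ⟨hg, fun K hK => (hg' K hK).comp g⟩⟩

/-- There are `n` columns whose halves before and after the cut are both uniformly linked, for all
parameters in `𝒦`. -/
def HasUniformColumns {W : Type u} [LinearOrder W] {ι : Type v} (r : W → W → Prop)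
    (src snk : ι → W) (𝒦 : Finset ℕ) (n : ℕ) : Prop :=
  ∃ (c d : Fin n → ι) (z z' : Fin n → W) (dir dir' : Bool), IsColumns r c d z z' ∧ ∀ K ∈ 𝒦,
    UniformlyLinked r (src ∘ c) z K dir ∧ UniformlyLinked r z' (snk ∘ d) K dir'

lemma exists_hasUniformColumns (𝒦 : Finset ℕ) (M : ℕ) :
    ∃ q, ∀ {W : Type u} [LinearOrder W] [Finite W] {r : W → W → Prop}, r ≤ (· < ·) →
      ∀ {ι : Type v} {src snk : ι → W}, HasCrossingLinkages r src snk q →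
      HasUniformColumns r src snk 𝒦 M := by
  obtain ⟨s, hs⟩ := exists_forall_uniformlyLinked 𝒦
  obtain ⟨n, hn⟩ := hs (s + 1) (Nat.le_succ s) M
  obtain ⟨n', hn'⟩ := hs (s + 1) (Nat.le_succ s) n
  obtain ⟨q, hq⟩ := exists_hasColumns (s + 1) n' s.succ_pos
  refine ⟨q, fun hr ι src snk h => ?_⟩
  obtain ⟨c, d, z, z', dir, dir', hcol, hleft, hright⟩ := hq hr h
  obtain ⟨g, hg⟩ := hn' hr hleft
  obtain ⟨g', hg'⟩ := hn hr (hright.comp g)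
  exact ⟨_, _, _, _, dir, dir', hcol.comp (g'.trans g).injective,
    fun K hK => ⟨(hg K hK).comp g', hg' K hK⟩⟩

end UniformColumns

section ClosingUp

/-! ### Closing up linkages to circuits -/

variable {W : Type u} {r : W → W → Prop} {ι κ : Type*}

lemma exists_notMem_and_rev_notMem {k b : ℕ} {bad : Finset (Fin (2 * (k + b)))} (hbad : #bad ≤ b) :
    ∃ f : Fin k → Fin (2 * (k + b)), Injective f ∧
      ∀ u, f u ∉ bad ∧ (f u).rev ∉ bad ∧ f u < (f u).rev := by
  classical
  let low (u : Fin (k + b)) : Fin (2 * (k + b)) := u.castLE (by omega)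
  have hcard : #{u | low u ∈ bad ∨ (low u).rev ∈ bad} ≤ #bad := by
    refine card_le_card_of_forall_subsingleton (fun u l => l = low u ∨ l = (low u).rev)
      (fun u hu => ?_) fun l _ u hu v hv => ?_
    · rcases (mem_filter.1 hu).2 with h | h
      · exact ⟨_, h, .inl rfl⟩
      · exact ⟨_, h, .inr rfl⟩
    · have hl := hu.2
      have hl' := hv.2
      simp only [low, Fin.ext_iff, Fin.val_rev, Fin.val_castLE] at hl hl' ⊢
      omega
  obtain ⟨C, hC, hCk⟩ := exists_subset_card_eq
    (s := ({u | low u ∈ bad ∨ (low u).rev ∈ bad} : Finset _)ᶜ) (n := k)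
    (by rw [card_compl, Fintype.card_fin]; omega)
  refine ⟨low ∘ C.orderEmbOfFin hCk, (Fin.castLE_injective _).comp (RelEmbedding.injective _),
    fun u => ?_⟩
  have hu := hC (orderEmbOfFin_mem C hCk u)
  simp only [mem_compl, mem_filter, mem_univ, true_and, not_or] at hu
  refine ⟨hu.1, hu.2, ?_⟩
  simp only [comp_apply, low, Fin.lt_def, Fin.val_rev, Fin.val_castLE]
  omega

/-- Two walks that exchange `e l` and `e l.rev` close up to a circuit. -/
lemma packing_hasCircuitIn_of_transGen {k b : ℕ} {src snk : ι → W} {e : Fin (2 * (k + b)) → ι}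
    {G : Fin (2 * (k + b)) → Set W} {ε : Bool} {bad : Finset (Fin (2 * (k + b)))}
    (hbad : #bad ≤ b)
    (hwalk : ∀ l, TransGen (fun i j => ReachIn r (G l) (src i) (snk j)) (e l) (e (orient ε l)))
    (hdisj : ∀ l ∉ bad, ∀ l' ∉ bad, l ≠ l' → Disjoint (G l) (G l')) :
    Packing (HasCircuitIn r src snk) k := by
  obtain ⟨f, hf, hfbad⟩ := exists_notMem_and_rev_notMem hbad
  choose hgood hrev hlt using hfbad
  refine ⟨fun u => G (f u) ∪ G (f u).rev, fun u v huv => ?_, fun u => ⟨e (f u), ?_⟩⟩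
  · have hne : f u ≠ f v := hf.ne huv
    have hne' : f u ≠ (f v).rev := fun h => by
      have := hlt u
      rw [h, Fin.rev_rev] at this
      exact this.asymm (hlt v)
    have hne'' : (f u).rev ≠ f v := fun h => hne' (by rw [← h, Fin.rev_rev])
    simp only [onFun, Set.disjoint_union_left, Set.disjoint_union_right]
    exact ⟨⟨hdisj _ (hgood u) _ (hgood v) hne, hdisj _ (hrev u) _ (hgood v) hne''⟩,
      hdisj _ (hgood u) _ (hrev v) hne', hdisj _ (hrev u) _ (hrev v) (Fin.rev_injective.ne hne)⟩
  · have hleft := TransGen.mono (fun _ _ h => ReachIn.mono_set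
      (Set.subset_union_left (t := G (f u).rev)) h) _ _ (hwalk (f u))
    have hright := TransGen.mono (fun _ _ h => ReachIn.mono_set
      (Set.subset_union_right (s := G (f u))) h) _ _ (hwalk (f u).rev)
    cases ε with
    | true => exact hleft
    | false => exact hleft.trans (by simpa [orient] using hright)

variable [LinearOrder W]

lemma IsLinkage.packing_hasCircuitIn {k : ℕ} {src snk : ι → W} {T : Fin (2 * k) → Set W}
    {e : Fin (2 * k) → ι} {ε : Bool} (hT : IsLinkage r T (src ∘ e) (snk ∘ e ∘ orient ε)) :
    Packing (HasCircuitIn r src snk) k :=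
  packing_hasCircuitIn_of_transGen (b := 0) (bad := ∅) le_rfl
    (fun l => .single (hT.isPath l).reachIn_ends) fun _ _ _ _ hne => hT.disjoint hne

lemma IsLinkage.packing_hasCircuitIn_of_card_le {k b : ℕ} {src snk : ι → W}
    {S T : Fin (2 * (k + b)) → Set W} {e f : Fin (2 * (k + b)) → ι} {ε ε' : Bool}
    (hS : IsLinkage r S (src ∘ e) (snk ∘ f ∘ orient ε))
    (hT : IsLinkage r T (src ∘ f) (snk ∘ e ∘ orient ε')) {Z : Finset W} (hZ : 2 * #Z ≤ b)
    (hST : ∀ l m, Disjoint (S l) (Z : Set W) → Disjoint (T m) (Z : Set W) →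
      Disjoint (S l) (T m)) : Packing (HasCircuitIn r src snk) k := by
  classical
  have hTε : IsLinkage r (T ∘ orient ε) (src ∘ f ∘ orient ε) (snk ∘ e ∘ orient ε' ∘ orient ε) :=
    hT.comp (orient ε).injective
  refine packing_hasCircuitIn_of_transGen (e := e) (G := fun l => S l ∪ T (orient ε l))
    (ε := ε' == ε) (bad := ({l | ¬ Disjoint (S l) (Z : Set W)} : Finset _) ∪
      ({l | ¬ Disjoint (T (orient ε l)) (Z : Set W)} : Finset _)) ?_ (fun l => ?_)
    fun l hl l' hl' hne => ?_
  · have := card_filter_not_disjoint_le hS.disjoint Z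
    have := card_filter_not_disjoint_le hTε.disjoint Z
    exact (card_union_le _ _).trans (by simp only [comp_apply] at this; omega)
  · have hSl := (hS.isPath l).reachIn_ends.mono_set (Set.subset_union_left (t := T (orient ε l)))
    have hTl := (hTε.isPath l).reachIn_ends.mono_set (Set.subset_union_right (s := S l))
    rw [← orient_orient]
    exact .tail (.single hSl) hTl
  · simp only [mem_union, mem_filter, mem_univ, true_and, not_or, not_not] at hl hl'
    simp only [Set.disjoint_union_left, Set.disjoint_union_right]
    exact ⟨⟨hS.disjoint hne, (hST l' _ hl'.1 hl.2).symm⟩, hST l _ hl.1 hl'.2, hTε.disjoint hne⟩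

lemma IsLinkage.union_comp (hr : r ≤ (· < ·)) {P : ι → Set W} {Q : κ → Set W} {a : ι → W}
    {b z z' : κ → W} {π : ι → κ} (hπ : Injective π) (hP : IsLinkage r P a (z ∘ π))
    (hQ : IsLinkage r Q z' b) (hedge : ∀ j, r (z j) (z' j)) (hlt : ∀ i j, z i < z' j) :
    IsLinkage r (fun i => P i ∪ Q (π i)) a (b ∘ π) := by
  have hPQ (i : ι) (j : κ) : Disjoint (P i) (Q j) := Set.disjoint_left.2 fun w hwP hwQ =>
    (hlt (π i) j).not_ge <|
      ((hQ.isPath j).isLeast.2 hwQ).trans ((hP.isPath i).isGreatest.2 hwP)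
  refine ⟨fun i => (hP.isPath i).union hr (hQ.isPath (π i)) (.single (hedge _)), fun i j hij => ?_⟩
  simp only [onFun, Set.disjoint_union_left, Set.disjoint_union_right]
  exact ⟨⟨hP.disjoint hij, (hPQ _ _).symm⟩, hPQ _ _, hQ.disjoint (hπ.ne hij)⟩

end ClosingUp

section WellLinkedCircuits

/-! ### Circuits in a well-linked digraph -/

lemma exists_before_before (dir dir' : Bool) (L : ℕ) :
    ∃ x y w : Fin L ↪o Fin (3 * L),
      (∀ i j, Before dir (x i) (y j)) ∧ ∀ i j, Before dir' (y i) (w j) := by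
  refine ⟨block (bif dir then 0 else 2), block 1, block (bif dir' then 2 else 0), ?_, ?_⟩
  · cases dir <;> exact fun i j => block_lt_block (by decide) _ _
  · cases dir' <;> exact fun i j => block_lt_block (by decide) _ _

section Legs

variable {W : Type u} [LinearOrder W] {r : W → W → Prop} {ι : Type*} {src snk : ι → W}

lemma packing_hasCircuitIn_of_two_legs (hr : r ≤ (· < ·)) {k : ℕ} {e : Fin (2 * k) → ι}
    {z z' : Fin (2 * k) → W} {ε ε' : Bool} (hedge : ∀ j, r (z j) (z' j)) (hlt : ∀ i j, z i < z' j)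
    (h : Linked r (src ∘ e) (z ∘ orient ε)) (h' : Linked r z' (snk ∘ e ∘ orient ε')) :
    Packing (HasCircuitIn r src snk) k := by
  obtain ⟨P, hP⟩ := h
  obtain ⟨Q, hQ⟩ := h'
  have hPQ := hP.union_comp hr (orient ε).injective hQ hedge hlt
  refine IsLinkage.packing_hasCircuitIn (e := e) (ε := ε' == ε) ⟨fun l => ?_, hPQ.disjoint⟩
  simpa only [comp_apply, orient_orient] using hPQ.isPath l

/-- A vertex outside `Z` common to the third leg and to one of the others would give a walk of
`hsrc` or of `hsnk`. -/
lemma packing_hasCircuitIn_of_three_legs (hr : r ≤ (· < ·)) {k b : ℕ}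
    {e f : Fin (2 * (k + b)) → ι} {z z' : Fin (2 * (k + b)) → W} {ε ε' δ : Bool}
    (hedge : ∀ j, r (z j) (z' j)) (hlt : ∀ i j, z i < z' j)
    (h : Linked r (src ∘ e) (z ∘ orient ε)) (h' : Linked r z' (snk ∘ f ∘ orient ε'))
    (h'' : Linked r (src ∘ f) (snk ∘ e ∘ orient δ)) {Z : Finset W} (hZ : 2 * #Z ≤ b)
    (hsrc : ∀ i j, ¬ ReachIn r (Z : Set W)ᶜ (src (f i)) (z j))
    (hsnk : ∀ i j, ¬ ReachIn r (Z : Set W)ᶜ (z' i) (snk (e j))) :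
    Packing (HasCircuitIn r src snk) k := by
  obtain ⟨P, hP⟩ := h
  obtain ⟨Q, hQ⟩ := h'
  obtain ⟨T, hT⟩ := h''
  have hPQ := hP.union_comp hr (orient ε).injective hQ hedge hlt
  have hS : IsLinkage r (fun l => P l ∪ Q (orient ε l)) (src ∘ e) (snk ∘ f ∘ orient (ε' == ε)) :=
    ⟨fun l => by simpa only [comp_apply, orient_orient] using hPQ.isPath l, hPQ.disjoint⟩
  refine hS.packing_hasCircuitIn_of_card_le hT hZ fun l m hl hm => Set.disjoint_left.2 ?_
  rw [Set.disjoint_union_left] at hl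
  rintro w (hw | hw) hwT
  · exact hsrc _ _ <| (((hT.isPath m).reachIn_left hwT).mono_set hm.subset_compl_right).trans
      (((hP.isPath l).reachIn_right hw).mono_set hl.1.subset_compl_right)
  · exact hsnk _ _ <| (((hQ.isPath _).reachIn_left hw).mono_set hl.2.subset_compl_right).trans
      (((hT.isPath m).reachIn_right hwT).mono_set hm.subset_compl_right)

end Legs

lemma exists_packing_hasCircuitIn_of_hasUniformColumns (k m : ℕ) :
    ∃ (𝒦 : Finset ℕ) (n : ℕ), ∀ {W : Type u} [LinearOrder W] [Finite W] {r : W → W → Prop},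
      r ≤ (· < ·) → ∀ {ι : Type v} {src snk : ι → W}, WellLinked r src snk m →
      HasUniformColumns r src snk 𝒦 n → Packing (HasCircuitIn r src snk) k := by
  obtain ⟨s, hs⟩ := exists_linked_orient (2 * k)
  obtain ⟨N, hN⟩ := exists_linked_orient (2 * (k + 4 * s))
  let L := m + N + 2 * (k + 4 * s)
  refine ⟨{2 * k, 2 * (k + 4 * s)}, 3 * L, fun {W} _ _ r hr {ι src snk} hlinked => ?_⟩
  rintro ⟨c, d, z, z', dir, dir', hcol, huniform⟩
  obtain ⟨⟨ε, hleft⟩, ε', hright⟩ := huniform (2 * k) (by simp)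
  obtain ⟨⟨δ, hleft'⟩, δ', hright'⟩ := huniform (2 * (k + 4 * s)) (by simp)
  obtain ⟨x, y, w, hxy, hyw⟩ := exists_before_before dir dir' L
  by_cases hsrc : ∀ Z : Finset W, #Z < s → ∃ i j,
      ReachIn r (Z : Set W)ᶜ (src (d (w i))) (z (y j))
  · obtain ⟨η, f, g, hfg⟩ := hs hr hsrc
    exact packing_hasCircuitIn_of_two_legs (e := d ∘ w ∘ f) (z := z ∘ y ∘ g) hr
      (fun _ => hcol.edge _) (fun _ _ => hcol.lt _ _) hfg
      (hright (g.trans y) (f.trans w) fun _ _ => hyw _ _)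
  by_cases hsnk : ∀ Z : Finset W, #Z < s → ∃ i j,
      ReachIn r (Z : Set W)ᶜ (z' (y i)) (snk (c (x j)))
  · obtain ⟨η, g, f, hgf⟩ := hs hr hsnk
    exact packing_hasCircuitIn_of_two_legs (e := c ∘ x ∘ f) (z' := z' ∘ y ∘ g) hr
      (fun _ => hcol.edge _) (fun _ _ => hcol.lt _ _)
      (hleft (f.trans x) (g.trans y) fun _ _ => hxy _ _) hgf
  push Not at hsrc hsnk
  obtain ⟨Z₁, hZ₁, hsrc⟩ := hsrc
  obtain ⟨Z₂, hZ₂, hsnk⟩ := hsnk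
  obtain ⟨η, f, e, hfe⟩ := hN hr (p := src ∘ d ∘ w) (q := snk ∘ c ∘ x) fun Z hZ =>
    hlinked.exists_reachIn (hcol.injective_right.comp w.injective)
      (hcol.injective_left.comp x.injective) (fun _ _ => (hcol.ne _ _).symm)
      (by simp only [Fintype.card_fin, L]; omega) (by simp only [Fintype.card_fin, L]; omega)
  classical
  let g : Fin (2 * (k + 4 * s)) ↪o Fin L := Fin.castLEOrderEmb (by omega)
  have hcard : 2 * #(Z₁ ∪ Z₂) ≤ 4 * s := by
    have := card_union_le Z₁ Z₂
    omega
  refine packing_hasCircuitIn_of_three_legs (e := c ∘ x ∘ e) (f := d ∘ w ∘ f) hr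
    (fun _ => hcol.edge _) (fun _ _ => hcol.lt _ _)
    (hleft' (e.trans x) (g.trans y) fun _ _ => hxy _ _)
    (hright' (g.trans y) (f.trans w) fun _ _ => hyw _ _) hfe hcard
    (fun i j h => hsrc (f i) (g j) (h.mono_set ?_)) (fun i j h => hsnk (g i) (e j) (h.mono_set ?_))
  all_goals simp

theorem exists_packing_hasCircuitIn_of_wellLinked (k m : ℕ) :
    ∃ N, ∀ {W : Type u} [LinearOrder W] [Finite W] {r : W → W → Prop}, r ≤ (· < ·) →
      ∀ {src snk : Fin N → W}, WellLinked r src snk m → Packing (HasCircuitIn r src snk) k := by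
  obtain ⟨𝒦, n, hcircuit⟩ := exists_packing_hasCircuitIn_of_hasUniformColumns k m
  obtain ⟨q, hq⟩ := exists_hasUniformColumns 𝒦 n
  obtain ⟨N, hN⟩ := packing_hasCircuitIn_or_hasCrossingLinkages k q m
  exact ⟨N, fun hr _ _ h => (hN hr h).elim id fun hcross => hcircuit hr h (hq hr hcross)⟩

end WellLinkedCircuits

section Feedback

/-! ### Minimum feedback vertex sets -/

variable {V : Type u} {r : V → V → Prop}

lemma exists_linearOrder_le_lt (h : ∀ v, ¬ TransGen r v v) :
    ∃ _ : LinearOrder V, r ≤ (· < ·) := by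
  classical
  have hpartial : IsPartialOrder V (ReflTransGen r) :=
    { refl _ := .refl
      trans _ _ _ := .trans
      antisymm a b hab hba := by
        rcases reflTransGen_iff_eq_or_transGen.1 hab with hba' | hab
        · exact hba'.symm
        · exact absurd (hab.trans_left hba) (h a) }
  obtain ⟨s, hs, hrs⟩ := extend_partialOrder (ReflTransGen r)
  let order : LinearOrder V :=
    { le := s
      le_refl := hs.refl
      le_trans := hs.trans
      le_antisymm := hs.antisymm
      le_total := hs.total
      toDecidableLE := Classical.decRel s }
  refine ⟨order, fun u v huv => lt_of_le_of_ne (hrs u v (.single huv)) ?_⟩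
  rintro rfl
  exact h _ (.single huv)

lemma transGen_restrict_of_closed {X : Set V} (hX : ∀ u v, r u v → u ∈ X → v ∈ X) {a b : V}
    (ha : a ∈ X) (h : TransGen r a b) : b ∈ X ∧ TransGen (restrict r X) a b := by
  induction h with
  | single hab => exact ⟨hX _ _ hab ha, .single ⟨hab, ha, hX _ _ hab ha⟩⟩
  | tail _ hbc ih => exact ⟨hX _ _ hbc ih.1, ih.2.tail ⟨hbc, ih.1, hX _ _ hbc ih.1⟩⟩

/-- A directed cycle cannot leave a set without outgoing edges. -/
lemma HasCycleIn.inter_or_diff {X U : Set V} (h : HasCycleIn r X)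
    (hU : ∀ u ∈ U, ∀ v ∈ X, r u v → v ∈ U) : HasCycleIn r (X ∩ U) ∨ HasCycleIn r (X \ U) := by
  obtain ⟨v, hv⟩ := h
  rw [Set.sdiff_eq, ← hasCycleIn_restrict, ← hasCycleIn_restrict]
  by_cases hvU : v ∈ U
  · exact .inl ⟨v, (transGen_restrict_of_closed
      (fun a b hab ha => hU a ha b hab.2.2 hab.1) hvU hv).2⟩
  · refine .inr ⟨v, transGen_swap.1 (TransGen.mono (fun a b hab => ⟨hab.1, hab.2.symm⟩) _ _
      (transGen_restrict_of_closed (r := swap (restrict r X)) (X := Uᶜ) ?_ hvU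
        (transGen_swap.2 hv)).2)⟩
    exact fun a b hba ha hb => ha (hU b hb a hba.2.2 hba.1)

/-- `Z` is a feedback vertex set of the subgraph induced on `X`: it meets all directed cycles
inside `X`. -/
def IsFeedback (r : V → V → Prop) (X Z : Set V) : Prop :=
  ¬ HasCycleIn r (X \ Z)

lemma IsFeedback.of_inter_subset {X Y Z T : Set V} (hT : IsFeedback r Y T) (hXY : X ⊆ Y)
    (h : X ∩ T ⊆ Z) : IsFeedback r X Z :=
  fun hX => hT (hX.mono fun _ hv => ⟨hXY hv.1, fun hvT => hv.2 (h ⟨hv.1, hvT⟩)⟩)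

lemma IsFeedback.union_of_closed {U T Z₁ Z₂ : Set V} (hU : ∀ u ∈ U, ∀ v ∉ T, r u v → v ∈ U)
    (h₁ : IsFeedback r (U \ T) Z₁) (h₂ : IsFeedback r (Uᶜ \ T) Z₂) :
    IsFeedback r Set.univ (T ∪ (Z₁ ∪ Z₂)) := by
  intro h
  rcases h.inter_or_diff fun u hu v hv => hU u hu v fun hvT => hv.2 (.inl hvT) with h | h
  · exact h₁ (h.mono fun v hv => ⟨⟨hv.2, fun hT => hv.1.2 (.inl hT)⟩,
      fun hZ => hv.1.2 (.inr (.inl hZ))⟩)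
  · exact h₂ (h.mono fun v hv => ⟨⟨hv.2, fun hT => hv.1.2 (.inl hT)⟩,
      fun hZ => hv.1.2 (.inr (.inr hZ))⟩)

/-- `T` is a feedback vertex set of minimum size. -/
structure IsMinFeedback (r : V → V → Prop) (T : Finset V) : Prop where
  isFeedback : IsFeedback r Set.univ T
  card_le : ∀ Z : Finset V, IsFeedback r Set.univ Z → #T ≤ #Z

lemma exists_isMinFeedback [Finite V] (r : V → V → Prop) : ∃ T, IsMinFeedback r T := by
  have := Fintype.ofFinite V
  have huniv : IsFeedback r Set.univ (univ : Finset V) := by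
    rintro ⟨v, hv⟩
    obtain ⟨_, hv, -⟩ := TransGen.head'_iff.1 hv
    exact hv.2.1.2 (mem_coe.2 (mem_univ v))
  obtain ⟨T, hT, hmin⟩ := Set.exists_min_image {Z : Finset V | IsFeedback r Set.univ Z} card
    (Set.toFinite _) ⟨univ, huniv⟩
  exact ⟨T, hT, hmin⟩

lemma IsMinFeedback.card_le_of_closed {T T' Z₁ Z₂ : Finset V} (hT : IsMinFeedback r T) {U : Set V}
    (hU : ∀ u ∈ U, ∀ v ∉ T', r u v → v ∈ U) (h₁ : IsFeedback r (U \ T') Z₁)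
    (h₂ : IsFeedback r (Uᶜ \ T') Z₂) : #T ≤ #T' + (#Z₁ + #Z₂) := by
  classical
  calc #T ≤ #(T' ∪ (Z₁ ∪ Z₂)) := hT.card_le _ (by push_cast; exact .union_of_closed hU h₁ h₂)
    _ ≤ #T' + #(Z₁ ∪ Z₂) := card_union_le _ _
    _ ≤ #T' + (#Z₁ + #Z₂) := by gcongr; exact card_union_le _ _

/-- After replacing `A ∪ B` by `D` in `T` there are still cycles on both sides of `U`. A packing of
`k` cycles on one side thus extends by a cycle on the other side, so that both sides have feedback
sets of size `t`. -/
lemma IsMinFeedback.card_le_two_mul {k t : ℕ}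
    (ih : ∀ X : Set V, Packing (fun S => HasCycleIn r (X ∩ S)) k ∨
      ∃ Z : Finset V, #Z ≤ t ∧ IsFeedback r X Z)
    (hpacking : ¬ Packing (HasCycleIn r) (k + 1)) {T A B D : Finset V} (hT : IsMinFeedback r T)
    (hA : A ⊆ T) (hB : B ⊆ T) (hAB : Disjoint A B) (hcard : #A = #B) (hD : #D < #A) {U : Set V}
    (hAU : ∀ v ∈ A, v ∉ D → v ∈ U) (hBU : ∀ v ∈ B, v ∉ U)
    (hU : ∀ u ∈ U, ∀ v ∉ D, r u v → v ∉ B ∧ (v ∉ T → v ∈ U)) : #A ≤ 2 * t := by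
  classical
  let T' := T \ (A ∪ B) ∪ D
  have hT'card : #T' + #A < #T := by
    have : #T' ≤ #(T \ (A ∪ B)) + #D := card_union_le _ _
    have := card_sdiff_add_card_eq_card (union_subset hA hB)
    have := card_union_of_disjoint hAB
    omega
  have hmem {v : V} (hv : v ∉ T') : v ∉ D ∧ (v ∈ T → v ∈ A ∨ v ∈ B) := by
    simp only [T', mem_union, mem_sdiff] at hv
    tauto
  have hclosed : ∀ u ∈ U, ∀ v ∉ T', r u v → v ∈ U := fun u hu v hv huv => by
    by_cases hvT : v ∈ T
    · have hvB := (hU u hu v (hmem hv).1 huv).1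
      exact hAU v (((hmem hv).2 hvT).resolve_right hvB) (hmem hv).1
    · exact (hU u hu v (hmem hv).1 huv).2 hvT
  have hA' : IsFeedback r (U \ T') A := hT.isFeedback.of_inter_subset (Set.subset_univ _)
    fun v hv => ((hmem hv.1.2).2 hv.2).resolve_right fun h => hBU v h hv.1.1
  have hB' : IsFeedback r (Uᶜ \ T') B := hT.isFeedback.of_inter_subset (Set.subset_univ _)
    fun v hv => ((hmem hv.1.2).2 hv.2).resolve_left fun h => hv.1.1 (hAU v h (hmem hv.1.2).1)
  have hcycle : HasCycleIn r (U \ T') := by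
    by_contra h
    have := hT.card_le_of_closed (Z₁ := ∅) hclosed (by simpa [IsFeedback] using h) hB'
    simp only [card_empty] at this
    omega
  have hcycle' : HasCycleIn r (Uᶜ \ T') := by
    by_contra h
    have := hT.card_le_of_closed (Z₂ := ∅) hclosed hA' (by simpa [IsFeedback] using h)
    simp only [card_empty] at this
    omega
  have hdisj : Disjoint (U \ T') (Uᶜ \ T') :=
    disjoint_compl_right.mono Set.sdiff_subset Set.sdiff_subset
  obtain ⟨Z₁, hZ₁, h₁⟩ := (ih _).resolve_left fun h => hpacking (h.cons hdisj hcycle')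
  obtain ⟨Z₂, hZ₂, h₂⟩ := (ih _).resolve_left fun h => hpacking (h.cons hdisj.symm hcycle)
  have := hT.card_le_of_closed hclosed h₁ h₂
  omega

end Feedback

section SplitDigraph

/-! ### Splitting the vertices of a feedback set -/

variable {V : Type u} {r : V → V → Prop} {T : Set V} {ι : Type*}

/-- The digraph `r` with every vertex `v ∈ T` split into a source `inl v`, which keeps the outgoing
edges, and a sink `inr v`, which keeps the incoming edges. The copies `inr v` with `v ∉ T` are
isolated. -/
def splitDigraph (r : V → V → Prop) (T : Set V) : V ⊕ V → V ⊕ V → Prop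
  | .inl u, .inl v => r u v ∧ v ∉ T
  | .inl u, .inr v => r u v ∧ v ∈ T
  | .inr _, _ => False

lemma IsFeedback.not_transGen_splitDigraph (hT : IsFeedback r Set.univ T) (w : V ⊕ V) :
    ¬ TransGen (splitDigraph r T) w w := by
  intro h
  obtain ⟨w', hww', -⟩ := TransGen.head'_iff.1 h
  obtain ⟨w'', -, hw''⟩ := TransGen.tail'_iff.1 h
  rcases w with u | u
  swap
  · exact hww'
  rcases w'' with u'' | u''
  swap
  · exact hw''
  have hreach (b : V ⊕ V) (hb : TransGen (splitDigraph r T) (.inl u) b) :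
      Sum.elim (fun v => v ∉ T ∧ TransGen (restrict r (Set.univ \ T)) u v) (fun _ => True) b := by
    induction hb with
    | @single b hb =>
      cases b with
      | inl v => exact ⟨hb.2, .single ⟨hb.1, ⟨trivial, hw''.2⟩, trivial, hb.2⟩⟩
      | inr v => trivial
    | @tail b c _ hbc ih =>
      rcases b with b | b
      swap
      · exact hbc.elim
      cases c with
      | inl v => exact ⟨hbc.2, ih.2.tail ⟨hbc.1, ⟨trivial, ih.1⟩, trivial, hbc.2⟩⟩
      | inr v => trivial
  exact hT ⟨u, (hreach _ h).2⟩

lemma ReachIn.transGen_of_splitDigraph {S : Set (V ⊕ V)} {a b : V}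
    (h : ReachIn (splitDigraph r T) S (.inl a) (.inr b)) (hb : .inl b ∈ S) :
    TransGen (restrict r (Sum.inl ⁻¹' S)) a b := by
  refine h.induction (motive := Sum.elim
    (fun v => ReflTransGen (restrict r (Sum.inl ⁻¹' S)) a v)
    (fun v => .inl v ∈ S → TransGen (restrict r (Sum.inl ⁻¹' S)) a v)) .refl ?_ hb
  rintro (u | u) (v | v) hu hv huv ih
  · exact ih.tail ⟨huv.1, hu.mem_right, hv⟩
  · exact fun hv => .tail' ih ⟨huv.1, hu.mem_right, hv⟩
  · exact huv.elim
  · exact huv.elim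

lemma HasCircuitIn.hasCycleIn {e : ι → V} {S : Set (V ⊕ V)}
    (h : HasCircuitIn (splitDigraph r T) (.inl ∘ e) (.inr ∘ e) S) :
    HasCycleIn r (Sum.inl ⁻¹' S) := by
  obtain ⟨i, hi⟩ := h
  have hwalk (j : ι)
      (hj : TransGen (fun i j => ReachIn (splitDigraph r T) S (.inl (e i)) (.inr (e j))) i j) :
      Sum.inl (e j) ∈ S → TransGen (restrict r (Sum.inl ⁻¹' S)) (e i) (e j) := by
    induction hj with
    | single hij => exact hij.transGen_of_splitDigraph
    | tail _ hbc ih => exact fun hc => (ih hbc.1).trans (hbc.transGen_of_splitDigraph hc)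
  obtain ⟨_, hi', -⟩ := TransGen.head'_iff.1 hi
  exact ⟨e i, hwalk i hi hi'.1⟩

lemma Packing.of_splitDigraph {e : ι → V} {k : ℕ}
    (h : Packing (HasCircuitIn (splitDigraph r T) (.inl ∘ e) (.inr ∘ e)) k) :
    Packing (HasCycleIn r) k := by
  obtain ⟨S, hS, hcircuit⟩ := h
  exact ⟨fun i => Sum.inl ⁻¹' S i, fun i j hij => (hS hij).preimage _,
    fun i => (hcircuit i).hasCycleIn⟩

lemma ReachIn.eq_or_notMem_of_splitDigraph {S : Set (V ⊕ V)} {a b : V}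
    (h : ReachIn (splitDigraph r T) S (.inl a) (.inl b)) : b = a ∨ b ∉ T := by
  rcases h.2.cases_tail with hab | ⟨w | w, -, hwb⟩
  · exact .inl (Sum.inl_injective hab)
  · exact .inr hwb.1.2
  · exact hwb.1.elim

lemma IsMinFeedback.wellLinked_splitDigraph {k t : ℕ}
    (ih : ∀ X : Set V, Packing (fun S => HasCycleIn r (X ∩ S)) k ∨
      ∃ Z : Finset V, #Z ≤ t ∧ IsFeedback r X Z)
    (hpacking : ¬ Packing (HasCycleIn r) (k + 1)) {T : Finset V} (hT : IsMinFeedback r T)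
    (e : ι ↪ V) (he : ∀ i, e i ∈ T) :
    WellLinked (splitDigraph r T) (.inl ∘ e) (.inr ∘ e) (2 * t + 1) := by
  classical
  intro I J hIJ hcard hI Z hZ
  by_contra! hsep
  have hsub (I : Finset ι) : I.map e ⊆ T := fun v hv => by
    obtain ⟨i, -, rfl⟩ := mem_map.1 hv
    exact he i
  have hAB : Disjoint (I.map e) (J.map e) := (disjoint_map e).2 hIJ
  let D : Finset V := Z.image (Sum.elim id id)
  have hDl {v : V} (hv : v ∉ D) : Sum.inl v ∉ Z := fun h => hv (mem_image.2 ⟨_, h, rfl⟩)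
  have hDr {v : V} (hv : v ∉ D) : Sum.inr v ∉ Z := fun h => hv (mem_image.2 ⟨_, h, rfl⟩)
  have hD : #D < #(I.map e) := by simpa using card_image_le.trans_lt hZ
  let U : Set V := {v | ∃ i ∈ I, ReachIn (splitDigraph r T) (Z : Set _)ᶜ (.inl (e i)) (.inl v)}
  have hAU : ∀ v ∈ I.map e, v ∉ D → v ∈ U := fun v hv hvD => by
    obtain ⟨i, hi, rfl⟩ := mem_map.1 hv
    exact ⟨i, hi, .refl (hDl hvD)⟩
  have hBU : ∀ v ∈ J.map e, v ∉ U := by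
    rintro v hv ⟨i, hi, hiv⟩
    rcases hiv.eq_or_notMem_of_splitDigraph with rfl | hvT
    · exact disjoint_left.1 hAB (mem_map_of_mem e hi) hv
    · exact hvT (hsub J hv)
  have hU : ∀ u ∈ U, ∀ v ∉ D, r u v → v ∉ J.map e ∧ (v ∉ T → v ∈ U) := by
    rintro u ⟨i, hi, hiu⟩ v hvD huv
    refine ⟨fun hvJ => ?_, fun hvT =>
      ⟨i, hi, hiu.trans (.single hiu.mem_right (hDl hvD) ⟨huv, hvT⟩)⟩⟩
    obtain ⟨j, hj, rfl⟩ := mem_map.1 hvJ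
    exact hsep i hi j hj (hiu.trans (.single hiu.mem_right (hDr hvD) ⟨huv, he j⟩))
  have := hT.card_le_two_mul ih hpacking (hsub I) (hsub J) hAB (by simpa) hD hAU hBU hU
  rw [card_map] at this
  omega

end SplitDigraph

theorem exists_packing_hasCycleIn_or_isFeedback (k : ℕ) :
    ∃ t, ∀ {V : Type u} [Finite V] (r : V → V → Prop),
      Packing (HasCycleIn r) k ∨ ∃ Z : Finset V, #Z ≤ t ∧ IsFeedback r Set.univ Z := by
  induction k with
  | zero => exact ⟨0, fun r => .inl ⟨finZeroElim, finZeroElim, finZeroElim⟩⟩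
  | succ k ih =>
    obtain ⟨t, ht⟩ := ih
    obtain ⟨N, hN⟩ := exists_packing_hasCircuitIn_of_wellLinked (k + 1) (2 * t + 1)
    refine ⟨N, fun {V} _ r => or_iff_not_imp_left.2 fun hpacking => ?_⟩
    obtain ⟨T, hT⟩ := exists_isMinFeedback r
    refine ⟨T, not_lt.1 fun hNT => hpacking ?_, hT.isFeedback⟩
    obtain ⟨e⟩ : Nonempty (Fin N ↪ T) :=
      Embedding.nonempty_of_card_le (by simpa using hNT.le)
    obtain ⟨_, hlt⟩ := exists_linearOrder_le_lt hT.isFeedback.not_transGen_splitDigraph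
    refine .of_splitDigraph (hN hlt (hT.wellLinked_splitDigraph (fun X => ?_) hpacking
      (e.trans (.subtype _)) fun i => (e i).2))
    refine (ht (restrict r X)).imp (.mono (fun _ => hasCycleIn_restrict.1) le_rfl) ?_
    rintro ⟨Z, hZ, hfeedback⟩
    exact ⟨Z, hZ, fun h => hfeedback (hasCycleIn_restrict.2 (by simpa [Set.sdiff_eq] using h))⟩

section ClosedWalk

/-! ### Directed cycles of the line digraph -/

variable {V : Type u} {r : V → V → Prop}

/-- `f 0, f 1, …, f n` is a closed walk with `n > 0` steps; the values of `f` beyond `n` are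
irrelevant. -/
structure IsClosedWalk (r : V → V → Prop) (f : ℕ → V) (n : ℕ) : Prop where
  pos : 0 < n
  closed : f n = f 0
  step : ∀ i < n, r (f i) (f (i + 1))

lemma exists_walk_of_transGen {a b : V} (h : TransGen r a b) :
    ∃ (f : ℕ → V) (n : ℕ), 0 < n ∧ f 0 = a ∧ f n = b ∧ ∀ i < n, r (f i) (f (i + 1)) := by
  induction h with
  | @single b hab =>
    exact ⟨fun i => if i = 0 then a else b, 1, one_pos, rfl, rfl, by simpa using hab⟩
  | @tail b c _ hbc ih =>
    obtain ⟨f, n, hn, h0, rfl, hstep⟩ := ih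
    refine ⟨update f (n + 1) c, n + 1, n.succ_pos, by simpa using h0, by simp, fun i hi => ?_⟩
    rcases Nat.lt_succ_iff_lt_or_eq.1 hi with hi | rfl
    · simpa [update_of_ne, hi.ne, (hi.trans n.lt_succ_self).ne] using hstep i hi
    · simpa using hbc

/-- A shortest closed walk repeats no vertex. -/
lemma exists_isClosedWalk_injOn {v : V} (h : TransGen r v v) :
    ∃ f n, IsClosedWalk r f n ∧ Set.InjOn f (Set.Iio n) := by
  classical
  have hex : ∃ n f, IsClosedWalk r f n := by
    obtain ⟨f, n, hn, h0, hfn, hstep⟩ := exists_walk_of_transGen h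
    exact ⟨n, f, hn, hfn.trans h0.symm, hstep⟩
  obtain ⟨f, hf⟩ := Nat.find_spec hex
  refine ⟨f, Nat.find hex, hf, ?_⟩
  have hne {i j : ℕ} (hij : i < j) (hj : j < Nat.find hex) : f i ≠ f j := fun hfij =>
    Nat.find_min hex (m := j - i) (by omega) ⟨fun m => f (i + m),
      { pos := by omega
        closed := by simp [Nat.add_sub_cancel' hij.le, hfij]
        step := fun m hm => hf.step (i + m) (by omega) }⟩
  intro i hi j hj hfij
  by_contra hij
  rcases lt_or_gt_of_ne hij with hij | hij
  · exact hne hij hj hfij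
  · exact hne hij hi hfij.symm

end ClosedWalk

section LineDigraph

variable {V : Type} {G : Digraph V}

lemma exists_isDicycle_of_transGen (hG : ∀ v, ¬ G.Adj v v) {v : V} (h : TransGen G.Adj v v) :
    ∃ l, G.IsDicycle l := by
  obtain ⟨f, n, hf, hinj⟩ := exists_isClosedWalk_injOn h
  have hn : 2 ≤ n := by
    by_contra hn
    obtain rfl : n = 1 := by have := hf.pos; omega
    exact hG (f 0) (by simpa [hf.closed] using hf.step 0 one_pos)
  refine ⟨(List.range n).map f, by simpa using hn, ?_, fun e he => ?_⟩
  · exact List.nodup_range.map_on fun i hi j hj => hinj (List.mem_range.1 hi) (List.mem_range.1 hj)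
  · obtain ⟨i, hi, rfl⟩ := List.mem_iff_getElem.1 he
    replace hi : i < n := by simpa using hi
    simp only [List.getElem_zip, List.getElem_rotate, List.getElem_map, List.getElem_range,
      List.length_map, List.length_range]
    rcases (Nat.succ_le_of_lt hi).lt_or_eq with h | rfl
    · rw [Nat.mod_eq_of_lt h]
      exact hf.step i hi
    · rw [Nat.mod_self, ← hf.closed]
      exact hf.step i hi

lemma HasCycleIn.exists_isDicycle {S : Set (V × V)} (hG : ∀ v, ¬ G.Adj v v)
    (h : HasCycleIn (lineDigraph G).Adj S) : ∃ l, G.IsDicycle l ∧ ∀ e ∈ cycleEdges l, e ∈ S := by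
  obtain ⟨e, he⟩ := h
  let H : Digraph V := ⟨fun a b => G.Adj a b ∧ (a, b) ∈ S⟩
  have hH : TransGen H.Adj e.1 e.1 := by
    refine he.lift Prod.fst ?_
    rintro ⟨a, b⟩ ⟨_, d⟩ ⟨⟨hab, -, rfl⟩, habS, -⟩
    exact ⟨hab, habS⟩
  obtain ⟨l, hlen, hnodup, hadj⟩ := exists_isDicycle_of_transGen (G := H) (hG · ·.1) hH
  exact ⟨l, ⟨hlen, hnodup, fun e he => (hadj e he).1⟩, fun e he => (hadj e he).2⟩

lemma hasCycleIn_lineDigraph_of_isDicycle {l : List V} (hl : G.IsDicycle l) {S : Set (V × V)}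
    (hS : ∀ e ∈ cycleEdges l, e ∈ S) : HasCycleIn (lineDigraph G).Adj S := by
  obtain ⟨hlen, -, hadj⟩ := hl
  have hpos : 0 < l.length := two_pos.trans_le hlen
  let e (i : ℕ) : V × V :=
    (l[i % l.length]'(Nat.mod_lt _ hpos), l[(i + 1) % l.length]'(Nat.mod_lt _ hpos))
  have hmem (i : ℕ) : e i ∈ cycleEdges l :=
    List.mem_iff_getElem.2
      ⟨i % l.length, by simpa [cycleEdges] using Nat.mod_lt _ hpos, by simp [cycleEdges, e]⟩
  have hstep (i : ℕ) : restrict (lineDigraph G).Adj S (e i) (e (i + 1)) :=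
    ⟨⟨hadj _ (hmem i), hadj _ (hmem (i + 1)), rfl⟩, hS _ (hmem i), hS _ (hmem (i + 1))⟩
  have hwalk (n : ℕ) : TransGen (restrict (lineDigraph G).Adj S) (e 0) (e (n + 1)) := by
    induction n with
    | zero => exact .single (hstep 0)
    | succ n ih => exact ih.tail (hstep _)
  have hclosed : e (l.length - 1 + 1) = e 0 := by
    simp [e, Nat.sub_add_cancel hpos]
  exact ⟨e 0, hclosed ▸ hwalk (l.length - 1)⟩

end LineDigraph

end ErdosPosa

/-- **Edge-Erdős–Pósa property of directed cycles.** For every `k` there is a `t` such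
that every finite loopless digraph `G` either contains `k` pairwise edge-disjoint
directed cycles, or has a set `X` of at most `t` directed edges whose deletion leaves
no directed cycle. -/
theorem dicycles_edge_erdosPosa (k : ℕ) :
    ∃ t : ℕ, ∀ (V : Type) [Fintype V] [DecidableEq V] (G : Digraph V),
      (∀ v, ¬ G.Adj v v) →
      (∃ C : Fin k → List V, (∀ i, G.IsDicycle (C i)) ∧
        ∀ i j, i ≠ j → ∀ e ∈ cycleEdges (C i), e ∉ cycleEdges (C j)) ∨
      (∃ X : Finset (V × V), X.card ≤ t ∧ (∀ e ∈ X, G.Adj e.1 e.2) ∧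
        ∀ l : List V,
          ¬ (Digraph.mk fun a b => G.Adj a b ∧ (a, b) ∉ X).IsDicycle l) := by
  classical
  obtain ⟨t, ht⟩ := ErdosPosa.exists_packing_hasCycleIn_or_isFeedback k
  refine ⟨t, fun V _ _ G hG => (ht (lineDigraph G).Adj).imp ?_ ?_⟩
  · rintro ⟨S, hS, hcycle⟩
    choose C hC hCS using fun i => (hcycle i).exists_isDicycle hG
    exact ⟨C, hC, fun i j hij e hi hj => (hS hij).notMem_of_mem_left (hCS i e hi) (hCS j e hj)⟩
  · rintro ⟨Z, hZ, hfeedback⟩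
    refine ⟨{e ∈ Z | G.Adj e.1 e.2}, (Finset.card_filter_le _ _).trans hZ,
      fun e he => (Finset.mem_filter.1 he).2, fun l ⟨hlen, hnodup, hadj⟩ => hfeedback ?_⟩
    refine ErdosPosa.hasCycleIn_lineDigraph_of_isDicycle ⟨hlen, hnodup, fun e he => (hadj e he).1⟩
      fun e he => ⟨trivial, fun heZ => (hadj e he).2 ?_⟩
    exact Finset.mem_filter.2 ⟨heZ, (hadj e he).1⟩
end

section
/- Let G be a digraph and let X be a set of vertices of the directed line graph L(G) that meets every directed cycle of L(G). Then X, regarded as a set of directed edges of G, meets every directed cycle of G; that is, the digraph obtained from G by deleting the edges in X contains no directed cycle. -/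
/-! The edges `(v₁, v₂), (v₂, v₃), …, (vₖ, v₁)` of a directed cycle `v₁, …, vₖ` of `G`, listed in
order, are the vertices of a directed cycle of `L(G)`: their tails are distinct, and each edge
ends where the next one starts. A cycle of `G` avoiding `X` would thus give a cycle of `L(G)`
avoiding `X`. -/

section

variable {V : Type} {l : List V}

theorem length_cycleEdges (l : List V) : (cycleEdges l).length = l.length := by
  simp [cycleEdges]

theorem map_fst_cycleEdges (l : List V) : (cycleEdges l).map Prod.fst = l :=
  List.map_fst_zip (List.length_rotate l 1).ge

theorem nodup_cycleEdges (hl : l.Nodup) : (cycleEdges l).Nodup :=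
  .of_map Prod.fst <| (map_fst_cycleEdges l).symm ▸ hl

theorem fst_mem_of_mem_cycleEdges {e : V × V} (he : e ∈ cycleEdges l) : e.1 ∈ l :=
  (List.of_mem_zip he).1

theorem snd_mem_of_mem_cycleEdges {e : V × V} (he : e ∈ cycleEdges l) : e.2 ∈ l :=
  List.mem_rotate.1 (List.of_mem_zip he).2

theorem snd_eq_fst_of_mem_cycleEdges_cycleEdges {p : (V × V) × (V × V)}
    (hp : p ∈ cycleEdges (cycleEdges l)) : p.1.2 = p.2.1 := by
  obtain ⟨i, hi, rfl⟩ := List.getElem_of_mem hp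
  simp [cycleEdges, List.getElem_rotate]

theorem isDicycle_mono {G H : Digraph V} (hl : G.IsDicycle l) (hGH : G ≤ H) : H.IsDicycle l :=
  let ⟨two_le_length, nodup, adj⟩ := hl
  ⟨two_le_length, nodup, fun e he => hGH (adj e he)⟩

theorem isDicycle_lineDigraph_cycleEdges {G : Digraph V} (hl : G.IsDicycle l) :
    (lineDigraph G).IsDicycle (cycleEdges l) := by
  obtain ⟨two_le_length, nodup, adj⟩ := hl
  refine ⟨(length_cycleEdges l).symm ▸ two_le_length, nodup_cycleEdges nodup, fun p hp => ?_⟩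
  exact ⟨adj p.1 (fst_mem_of_mem_cycleEdges hp), adj p.2 (snd_mem_of_mem_cycleEdges hp),
    snd_eq_fst_of_mem_cycleEdges_cycleEdges hp⟩

theorem edge_hitting_of_line_vertex_hitting_general (G : Digraph V) (X : Set (V × V))
    (hX : ∀ l : List (V × V), (lineDigraph G).IsDicycle l → ∃ e ∈ l, e ∈ X) (l : List V) :
    ¬ (Digraph.mk fun a b => G.Adj a b ∧ (a, b) ∉ X).IsDicycle l := by
  intro hl
  have hlG : G.IsDicycle l := isDicycle_mono hl fun _ _ hab => hab.1
  obtain ⟨e, he, heX⟩ := hX (cycleEdges l) (isDicycle_lineDigraph_cycleEdges hlG)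
  have heX' : e ∉ X := (hl.2.2 e he).2
  exact heX' heX

end

/-- If `X` is a set of vertices of the directed line graph `L(G)` (i.e. a set of
directed edges of `G`) meeting every directed cycle of `L(G)`, then deleting the edges
in `X` from `G` leaves no directed cycle. -/
theorem edge_hitting_of_line_vertex_hitting {V : Type} [Fintype V] (G : Digraph V)
    (hG : ∀ v, ¬ G.Adj v v) (X : Set (V × V)) (hXE : ∀ e ∈ X, G.Adj e.1 e.2)
    (hX : ∀ l : List (V × V), (lineDigraph G).IsDicycle l → ∃ e ∈ l, e ∈ X) :
    ∀ l : List V, ¬ (Digraph.mk fun a b => G.Adj a b ∧ (a, b) ∉ X).IsDicycle l :=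
  edge_hitting_of_line_vertex_hitting_general G X hX
end
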